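/- arXiv:1602.00429 — 2 statements merged into one kernel-verified Lean document; each statement's English description precedes it below -/
import Mathlib

section
/- Let Q be a regular local ring, f₁,…,f_c a Q-regular sequence, and R = Q/(f₁,…,f_c) (a local complete intersection). Let M and N be finitely generated R-modules such that at least one of M, N is maximal Cohen–Macaulay. If Tor_i^R(M,N) = 0 for all sufficiently large i, then Tor_i^R(M,N) = 0 for all i > 0. -/
/-!
STATEMENT 3: Over a local complete intersection `R = Q ⧸ (f₁, …, f_c)`, if at least one of the
finitely generated `R`-modules `M`, `N` is maximal Cohen–Macaulay (depth = dim R) and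
`Tor_i^R(M, N) = 0` for all sufficiently large `i`, then `Tor_i^R(M, N) = 0` for all `i > 0`.
-/

open CategoryTheory CategoryTheory.Limits

universe u

/-- A Noetherian local ring is regular if its maximal ideal can be generated by
(Krull dimension of the ring) many elements. -/
def IsRegularLocal (Q : Type u) [CommRing Q] [IsLocalRing Q] : Prop :=
  IsNoetherianRing Q ∧ ∃ s : Finset Q, Ideal.span (s : Set Q) = IsLocalRing.maximalIdeal Q ∧
    (s.card : WithBot ℕ∞) = ringKrullDim Q

/-- The depth of a module over a Noetherian local ring: the length of a maximal `M`-regular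
sequence contained in the maximal ideal, i.e. the supremum of lengths of `M`-regular sequences
of elements of the maximal ideal. -/
noncomputable def moduleDepth (R : Type u) [CommRing R] [IsLocalRing R]
    (M : Type u) [AddCommGroup M] [Module R M] : ℕ∞ :=
  sSup {n : ℕ∞ | ∃ rs : List R, n = (rs.length : ℕ∞) ∧
    (∀ x ∈ rs, x ∈ IsLocalRing.maximalIdeal R) ∧ RingTheory.Sequence.IsRegular M rs}

lemma exists_shortExact_ofHom {A : Type u} [CommRing A] {X Y Z : Type u} [AddCommGroup X]
    [Module A X] [AddCommGroup Y] [Module A Y] [AddCommGroup Z] [Module A Z] {f : X →ₗ[A] Y}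
    {g : Y →ₗ[A] Z} (hf : Function.Injective f) (hfg : Function.Exact f g)
    (hg : Function.Surjective g) :
    ∃ h, (ShortComplex.mk (ModuleCat.ofHom f) (ModuleCat.ofHom g) h).ShortExact := by
  refine ⟨?_, ?_⟩
  · ext x; exact hfg.apply_apply_eq_zero x
  · refine ShortComplex.ShortExact.mk' ?_ ?_ ?_
    · rw [ShortComplex.ShortExact.moduleCat_exact_iff_function_exact]; exact hfg
    · exact (ModuleCat.mono_iff_injective _).mpr hf
    · exact (ModuleCat.epi_iff_surjective _).mpr hg

/-- `Tor_i^A(M, N) = 0`, for unbundled modules. -/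
def TorVanishes (A : Type u) [CommRing A] (M N : Type u) [AddCommGroup M] [Module A M]
    [AddCommGroup N] [Module A N] (i : ℕ) : Prop :=
  IsZero (((Tor (ModuleCat.{u} A) i).obj (ModuleCat.of A M)).obj (ModuleCat.of A N))

namespace TorVanishes

open MonoidalCategory

section

variable {A : Type u} [CommRing A]

/-- The complex `M ⊗ P` for `P` the standard projective resolution of `N`. -/
noncomputable abbrev tensorResolution (M N : ModuleCat.{u} A) : ChainComplex (ModuleCat.{u} A) ℕ :=
  (((tensoringLeft (ModuleCat.{u} A)).obj M).mapHomologicalComplex _).obj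
    (projectiveResolution N).complex

lemma iff_isZero_homology (M N : Type u) [AddCommGroup M] [Module A M]
    [AddCommGroup N] [Module A N] (i : ℕ) : TorVanishes A M N i ↔
      IsZero ((tensorResolution (ModuleCat.of A M) (ModuleCat.of A N)).homology i) :=
  Iso.isZero_iff ((projectiveResolution _).isoLeftDerivedObj _ i)

instance (M : ModuleCat.{u} A) [Projective M] : Module.Flat A M :=
  have := (IsProjective.iff_projective M).mpr ‹_›
  inferInstance

/-- Tensoring a short complex with the standard projective resolution of `N`. -/
noncomputable abbrev tensorShortComplex (S : ShortComplex (ModuleCat.{u} A)) (N : ModuleCat.{u} A) :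
    ShortComplex (ChainComplex (ModuleCat.{u} A) ℕ) where
  X₁ := tensorResolution S.X₁ N
  X₂ := tensorResolution S.X₂ N
  X₃ := tensorResolution S.X₃ N
  f := (NatTrans.mapHomologicalComplex ((tensoringLeft _).map S.f) _).app _
  g := (NatTrans.mapHomologicalComplex ((tensoringLeft _).map S.g) _).app _
  zero := by
    ext n : 1
    have : S.f ▷ (projectiveResolution N).complex.X n ≫
        S.g ▷ (projectiveResolution N).complex.X n = 0 := by
      rw [← comp_whiskerRight, S.zero, MonoidalPreadditive.zero_whiskerRight]
    exact this

lemma tensorShortComplex_shortExact {S : ShortComplex (ModuleCat.{u} A)} (hS : S.ShortExact)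
    (N : ModuleCat.{u} A) : (tensorShortComplex S N).ShortExact := by
  apply HomologicalComplex.shortExact_of_degreewise_shortExact
  intro n
  exact hS.map_of_exact (tensorRight ((projectiveResolution N).complex.X n))

variable {X Y Z : Type u} [AddCommGroup X] [Module A X] [AddCommGroup Y] [Module A Y]
  [AddCommGroup Z] [Module A Z] {f : X →ₗ[A] Y} {g : Y →ₗ[A] Z}

variable {N : Type u} [AddCommGroup N] [Module A N]

lemma middle (hf : Function.Injective f) (hfg : Function.Exact f g)
    (hg : Function.Surjective g) {i : ℕ} (hX : TorVanishes A X N i) (hZ : TorVanishes A Z N i) :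
    TorVanishes A Y N i := by
  obtain ⟨h, hS⟩ := exists_shortExact_ofHom hf hfg hg
  rw [iff_isZero_homology] at *
  exact ((tensorShortComplex_shortExact hS _).homology_exact₂ i).isZero_of_both_zeros
    (hX.eq_zero_of_src _) (hZ.eq_zero_of_tgt _)

lemma right (hf : Function.Injective f) (hfg : Function.Exact f g)
    (hg : Function.Surjective g) {i : ℕ} (hY : TorVanishes A Y N (i + 1))
    (hX : TorVanishes A X N i) : TorVanishes A Z N (i + 1) := by
  obtain ⟨h, hS⟩ := exists_shortExact_ofHom hf hfg hg
  rw [iff_isZero_homology] at *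
  exact ((tensorShortComplex_shortExact hS _).homology_exact₃ (i + 1) i rfl).isZero_of_both_zeros
    (hY.eq_zero_of_src _) (hX.eq_zero_of_tgt _)

lemma left (hf : Function.Injective f) (hfg : Function.Exact f g)
    (hg : Function.Surjective g) {i : ℕ} (hZ : TorVanishes A Z N (i + 1))
    (hY : TorVanishes A Y N i) : TorVanishes A X N i := by
  obtain ⟨h, hS⟩ := exists_shortExact_ofHom hf hfg hg
  rw [iff_isZero_homology] at *
  exact ((tensorShortComplex_shortExact hS _).homology_exact₁ (i + 1) i rfl).isZero_of_both_zeros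
    (hZ.eq_zero_of_src _) (hY.eq_zero_of_tgt _)

lemma iff_exact_lTensor (M N : Type u) [AddCommGroup M] [Module A M]
    [AddCommGroup N] [Module A N] (i : ℕ) : TorVanishes A M N (i + 1) ↔
      Function.Exact
        (((projectiveResolution (ModuleCat.of A N)).complex.d (i + 2) (i + 1)).hom.lTensor M)
        (((projectiveResolution (ModuleCat.of A N)).complex.d (i + 1) i).hom.lTensor M) := by
  rw [iff_isZero_homology, ← HomologicalComplex.exactAt_iff_isZero_homology,
    HomologicalComplex.exactAt_iff' _ (i + 2) (i + 1) i (by simp) (by simp),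
    ShortComplex.ShortExact.moduleCat_exact_iff_function_exact]
  rfl

lemma exact_resolution (N : ModuleCat.{u} A) (i : ℕ) : Function.Exact
    ((projectiveResolution N).complex.d (i + 2) (i + 1)).hom
    ((projectiveResolution N).complex.d (i + 1) i).hom := by
  have := (projectiveResolution N).complex_exactAt_succ i
  rwa [HomologicalComplex.exactAt_iff' _ (i + 2) (i + 1) i (by simp) (by simp),
    ShortComplex.ShortExact.moduleCat_exact_iff_function_exact] at this

lemma exact_resolution_zero (N : ModuleCat.{u} A) : Function.Exact
    ((projectiveResolution N).complex.d 1 0).hom ((projectiveResolution N).π.f 0).hom := by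
  have := (projectiveResolution N).exact₀
  rwa [ShortComplex.ShortExact.moduleCat_exact_iff_function_exact] at this

lemma of_flat (M N : Type u) [AddCommGroup M] [Module A M]
    [AddCommGroup N] [Module A N] [Module.Flat A M] (i : ℕ) : TorVanishes A M N (i + 1) := by
  rw [iff_exact_lTensor]
  exact Module.Flat.lTensor_exact M (exact_resolution _ _)

/-- Given `K → F → M → 0` exact, `Z → P → N → 0` exact, with `K ⊗ P → F ⊗ P` injective:
if `M ⊗ Z → M ⊗ P` is injective, so is `K ⊗ N → F ⊗ N`. -/
lemma injective_rTensor_of_injective_lTensor {K F M Z P N : Type u}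
    [AddCommGroup K] [Module A K] [AddCommGroup F] [Module A F] [AddCommGroup M] [Module A M]
    [AddCommGroup Z] [Module A Z] [AddCommGroup P] [Module A P] [AddCommGroup N] [Module A N]
    {k : K →ₗ[A] F} {p : F →ₗ[A] M} {z : Z →ₗ[A] P} {q : P →ₗ[A] N} [Module.Flat A P]
    (hk : Function.Injective k) (hkp : Function.Exact k p) (hp : Function.Surjective p)
    (hzq : Function.Exact z q) (hq : Function.Surjective q)
    (h : Function.Injective (z.lTensor M)) : Function.Injective (k.rTensor N) := by
  rw [injective_iff_map_eq_zero]
  intro t ht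
  obtain ⟨t, rfl⟩ := q.lTensor_surjective K hq t
  have h1 : q.lTensor F (k.rTensor P t) = 0 := by
    rw [← ht, ← LinearMap.comp_apply, ← LinearMap.comp_apply, LinearMap.lTensor_comp_rTensor,
      LinearMap.rTensor_comp_lTensor]
  obtain ⟨s, hs⟩ := (lTensor_exact F hzq hq _).mp h1
  have h2 : p.rTensor Z s = 0 := by
    apply h
    rw [map_zero, ← LinearMap.comp_apply, LinearMap.lTensor_comp_rTensor,
      ← LinearMap.rTensor_comp_lTensor, LinearMap.comp_apply, hs]
    exact (rTensor_exact P hkp hp).apply_apply_eq_zero t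
  obtain ⟨s, rfl⟩ := (rTensor_exact Z hkp hp _).mp h2
  have h3 : t = z.lTensor K s := by
    apply Module.Flat.rTensor_preserves_injective_linearMap (M := P) k hk
    rw [← hs, ← LinearMap.comp_apply, ← LinearMap.comp_apply, LinearMap.lTensor_comp_rTensor,
      LinearMap.rTensor_comp_lTensor]
  rw [h3]
  exact (lTensor_exact K hzq hq).apply_apply_eq_zero s

lemma injective_lTensor_iff_injective_rTensor {K F M : Type u}
    [AddCommGroup K] [Module A K] [AddCommGroup F] [Module A F] [AddCommGroup M] [Module A M]
    (k : K →ₗ[A] F) : Function.Injective (k.lTensor M) ↔ Function.Injective (k.rTensor M) := by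
  rw [← LinearMap.comm_comp_rTensor_comp_comm_eq]
  simp

/-- The syzygies in the standard projective resolution. -/
noncomputable abbrev syzygy (N : Type u) [AddCommGroup N] [Module A N] (i : ℕ) :
    Submodule A ((projectiveResolution (ModuleCat.of A N)).complex.X i) :=
  LinearMap.range ((projectiveResolution (ModuleCat.of A N)).complex.d (i + 1) i).hom

lemma iff_injective_syzygy (M N : Type u) [AddCommGroup M] [Module A M]
    [AddCommGroup N] [Module A N] (i : ℕ) : TorVanishes A M N (i + 1) ↔
      Function.Injective ((syzygy (A := A) N i).subtype.lTensor M) := by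
  rw [iff_exact_lTensor]
  set d := ((projectiveResolution (ModuleCat.of A N)).complex.d (i + 1) i).hom
  set e := ((projectiveResolution (ModuleCat.of A N)).complex.d (i + 2) (i + 1)).hom
  have hd : d = (syzygy N i).subtype ∘ₗ d.rangeRestrict := rfl
  have hed : Function.Exact e d.rangeRestrict := by
    intro x
    rw [← exact_resolution (ModuleCat.of A N) i x, Subtype.ext_iff]
    rfl
  have hex := lTensor_exact M hed d.surjective_rangeRestrict
  rw [hd, LinearMap.lTensor_comp]
  refine ⟨fun h ↦ ?_, fun h ↦ ?_⟩
  · rw [injective_iff_map_eq_zero]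
    intro t ht
    obtain ⟨t, rfl⟩ := d.rangeRestrict.lTensor_surjective M d.surjective_rangeRestrict t
    exact (hex t).mpr ((h t).mp ht)
  · intro t
    rw [← hex t, LinearMap.comp_apply, map_eq_zero_iff _ h]

lemma resolution_surjective (N : Type u) [AddCommGroup N] [Module A N] :
    Function.Surjective ((projectiveResolution (ModuleCat.of A N)).π.f 0).hom :=
  (ModuleCat.epi_iff_surjective _).mp inferInstance

lemma exact_syzygy_zero (N : Type u) [AddCommGroup N] [Module A N] :
    Function.Exact (syzygy (A := A) N 0).subtype
      ((projectiveResolution (ModuleCat.of A N)).π.f 0).hom := by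
  intro x
  rw [exact_resolution_zero (ModuleCat.of A N) x]
  simp

lemma exact_syzygy_succ (N : Type u) [AddCommGroup N] [Module A N] (i : ℕ) :
    Function.Exact (syzygy (A := A) N (i + 1)).subtype
      ((projectiveResolution (ModuleCat.of A N)).complex.d (i + 1) i).hom.rangeRestrict := by
  intro x
  rw [Subtype.ext_iff]
  refine (exact_resolution (ModuleCat.of A N) i x).trans ?_
  simp

/-- `Tor₁` computed from a flat presentation of the first variable. -/
lemma one_iff_injective {K F M N : Type u}
    [AddCommGroup K] [Module A K] [AddCommGroup F] [Module A F] [AddCommGroup M] [Module A M]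
    [AddCommGroup N] [Module A N] {k : K →ₗ[A] F} {p : F →ₗ[A] M} [Module.Flat A F]
    (hk : Function.Injective k) (hkp : Function.Exact k p) (hp : Function.Surjective p) :
    TorVanishes A M N 1 ↔ Function.Injective (k.rTensor N) := by
  rw [iff_injective_syzygy M N 0]
  refine ⟨injective_rTensor_of_injective_lTensor hk hkp hp (exact_syzygy_zero N)
    (resolution_surjective N), fun h ↦ ?_⟩
  rw [injective_lTensor_iff_injective_rTensor]
  rw [← injective_lTensor_iff_injective_rTensor] at h
  exact injective_rTensor_of_injective_lTensor (Submodule.subtype_injective _)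
    (exact_syzygy_zero N) (resolution_surjective N) hkp hp h

lemma succ_succ_iff {K F M N : Type u}
    [AddCommGroup K] [Module A K] [AddCommGroup F] [Module A F] [AddCommGroup M] [Module A M]
    [AddCommGroup N] [Module A N] {k : K →ₗ[A] F} {p : F →ₗ[A] M} [Module.Flat A F]
    (hk : Function.Injective k) (hkp : Function.Exact k p) (hp : Function.Surjective p) (i : ℕ) :
    TorVanishes A M N (i + 2) ↔ TorVanishes A K N (i + 1) :=
  ⟨fun h ↦ left hk hkp hp h (of_flat F N i), right hk hkp hp (of_flat F N (i + 1))⟩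

lemma succ_succ_iff_syzygy (M N : Type u) [AddCommGroup M] [Module A M]
    [AddCommGroup N] [Module A N] (i j : ℕ) :
    TorVanishes A N M (i + j + 2) ↔ TorVanishes A (syzygy (A := A) N i) M (j + 1) := by
  induction i generalizing j with
  | zero =>
    rw [zero_add]
    exact succ_succ_iff (Submodule.subtype_injective _) (exact_syzygy_zero N)
      (resolution_surjective N) j
  | succ i ih =>
    rw [show i + 1 + j + 2 = i + (j + 1) + 2 by ring, ih (j + 1)]
    exact succ_succ_iff (Submodule.subtype_injective _) (exact_syzygy_succ N i)
      (LinearMap.surjective_rangeRestrict _) j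

lemma symm {M N : Type u} [AddCommGroup M] [Module A M]
    [AddCommGroup N] [Module A N] {i : ℕ} (h : TorVanishes A M N (i + 1)) :
    TorVanishes A N M (i + 1) := by
  rw [iff_injective_syzygy, injective_lTensor_iff_injective_rTensor] at h
  cases i with
  | zero =>
    exact (one_iff_injective (Submodule.subtype_injective _) (exact_syzygy_zero N)
      (resolution_surjective N)).mpr h
  | succ i =>
    rw [succ_succ_iff_syzygy M N i 0]
    exact (one_iff_injective (Submodule.subtype_injective _) (exact_syzygy_succ N i)
      (LinearMap.surjective_rangeRestrict _)).mpr h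

end

section BaseChange

open TensorProduct

variable {B A : Type u} [CommRing B] [CommRing A] [Algebra B A]

lemma injective_lTensor_baseChange_iff {K F N : Type u} [AddCommGroup K] [Module B K]
    [AddCommGroup F] [Module B F] [AddCommGroup N] [Module A N] [Module B N] [IsScalarTower B A N]
    (k : K →ₗ[B] F) : Function.Injective ((k.baseChange A).lTensor N) ↔
      Function.Injective (k.lTensor N) := by
  have : (k.lTensor N) ∘ AlgebraTensorModule.cancelBaseChange B A A N K =
      AlgebraTensorModule.cancelBaseChange B A A N F ∘ (k.baseChange A).lTensor N := by
    have : (AlgebraTensorModule.lTensor A N k) ∘ₗ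
          (AlgebraTensorModule.cancelBaseChange B A A N K).toLinearMap =
        (AlgebraTensorModule.cancelBaseChange B A A N F).toLinearMap ∘ₗ
          (k.baseChange A).lTensor N := by
      ext; simp
    exact congrArg DFunLike.coe this
  rw [← EquivLike.comp_injective _ (AlgebraTensorModule.cancelBaseChange B A A N F), ← this,
    EquivLike.injective_comp]

lemma exists_flat_surjective (B : Type u) [CommRing B] (M : Type u) [AddCommGroup M]
    [Module B M] : ∃ (F : Type u) (_ : AddCommGroup F) (_ : Module B F) (_ : Module.Flat B F)
      (p : F →ₗ[B] M), Function.Surjective p :=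
  ⟨M →₀ B, inferInstance, inferInstance, inferInstance, Finsupp.linearCombination B id,
    Finsupp.linearCombination_id_surjective B M⟩

/-- Change of rings for a module `M` that is Tor-independent of `A` over `B`. -/
lemma baseChange_iff (M N : Type u) [AddCommGroup M] [Module B M] [AddCommGroup N] [Module A N]
    [Module B N] [IsScalarTower B A N] (h : ∀ i, TorVanishes B M A (i + 1)) (i : ℕ) :
    TorVanishes A (A ⊗[B] M) N (i + 1) ↔ TorVanishes B M N (i + 1) := by
  induction i generalizing M with
  | zero =>
    obtain ⟨F, _, _, _, p, hp⟩ := exists_flat_surjective B M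
    have hk := Submodule.subtype_injective p.ker
    have hkp : Function.Exact p.ker.subtype p := LinearMap.exact_subtype_ker_map p
    have h0 := (one_iff_injective hk hkp hp).mp (h 0)
    rw [← injective_lTensor_iff_injective_rTensor] at h0
    have hkA : Function.Injective (p.ker.subtype.baseChange A) := h0
    rw [one_iff_injective hk hkp hp, one_iff_injective (k := p.ker.subtype.baseChange A)
      (p := p.baseChange A) hkA (lTensor_exact A hkp hp) (p.lTensor_surjective A hp),
      ← injective_lTensor_iff_injective_rTensor, ← injective_lTensor_iff_injective_rTensor,
      injective_lTensor_baseChange_iff]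
  | succ i ih =>
    obtain ⟨F, _, _, _, p, hp⟩ := exists_flat_surjective B M
    have hk := Submodule.subtype_injective p.ker
    have hkp : Function.Exact p.ker.subtype p := LinearMap.exact_subtype_ker_map p
    have h0 := (one_iff_injective hk hkp hp).mp (h 0)
    rw [← injective_lTensor_iff_injective_rTensor] at h0
    have hkA : Function.Injective (p.ker.subtype.baseChange A) := h0
    rw [succ_succ_iff hk hkp hp, succ_succ_iff (k := p.ker.subtype.baseChange A)
      (p := p.baseChange A) hkA (lTensor_exact A hkp hp) (p.lTensor_surjective A hp)]
    exact ih _ fun j ↦ (succ_succ_iff hk hkp hp j).mp (h (j + 1))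

lemma exact_toSpanSingleton_linearMap {r : B}
    (hker : RingHom.ker (algebraMap B A) = Ideal.span {r}) :
    Function.Exact (LinearMap.toSpanSingleton B B r) (Algebra.linearMap B A) := by
  intro x
  have : x ∈ RingHom.ker (algebraMap B A) ↔ x ∈ Ideal.span {r} := by rw [hker]
  rw [RingHom.mem_ker, Ideal.mem_span_singleton'] at this
  simpa using this

lemma lid_rTensor_toSpanSingleton (r : B) {V : Type u} [AddCommGroup V] [Module B V]
    (t : B ⊗[B] V) : TensorProduct.lid B V ((LinearMap.toSpanSingleton B B r).rTensor V t) =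
      r • TensorProduct.lid B V t := by
  have : (TensorProduct.lid B V).toLinearMap ∘ₗ (LinearMap.toSpanSingleton B B r).rTensor V =
      r • (TensorProduct.lid B V).toLinearMap := by
    ext; simp
  exact LinearMap.congr_fun this t

lemma exists_smul_eq_of_one_tmul_eq_zero {r : B} (hA : Function.Surjective (algebraMap B A))
    (hker : RingHom.ker (algebraMap B A) = Ideal.span {r}) {V : Type u} [AddCommGroup V]
    [Module B V] {y : V} (hy : (1 : A) ⊗ₜ[B] y = 0) : ∃ v : V, r • v = y := by
  have h1 : (Algebra.linearMap B A).rTensor V (1 ⊗ₜ y) = 0 := by simpa using hy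
  obtain ⟨t, ht⟩ := (rTensor_exact V (exact_toSpanSingleton_linearMap hker) hA _).mp h1
  refine ⟨TensorProduct.lid B V t, ?_⟩
  rw [← lid_rTensor_toSpanSingleton, ht, TensorProduct.lid_tmul, one_smul]

lemma of_isSMulRegular {r : B} (hA : Function.Surjective (algebraMap B A))
    (hker : RingHom.ker (algebraMap B A) = Ideal.span {r}) (hr : IsSMulRegular B r)
    {V : Type u} [AddCommGroup V] [Module B V] (hV : IsSMulRegular V r) (i : ℕ) :
    TorVanishes B V A (i + 1) := by
  have hk : Function.Injective (LinearMap.toSpanSingleton B B r) := by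
    intro x y hxy
    apply hr
    simpa [mul_comm] using hxy
  have hkp := exact_toSpanSingleton_linearMap hker
  apply symm
  cases i with
  | zero =>
    refine (one_iff_injective hk hkp hA).mpr fun x y hxy ↦ ?_
    apply (TensorProduct.lid B V).injective
    apply hV
    simp only [← lid_rTensor_toSpanSingleton, hxy]
  | succ i => exact (succ_succ_iff hk hkp hA i).mpr (of_flat B V i)

/-- If `M` is a module over `A = B ⧸ (r)`, `p : F → M` is a presentation over `B` by a module on
which `r` is regular, then multiplication by `r` on `F` induces an exact sequence
`0 → M → A ⊗ ker p → A ⊗ F`. -/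
lemma exists_exact_baseChange_ker {r : B} (hA : Function.Surjective (algebraMap B A))
    (hker : RingHom.ker (algebraMap B A) = Ideal.span {r}) {F M : Type u} [AddCommGroup F]
    [Module B F] [AddCommGroup M] [Module B M] [Module A M] [IsScalarTower B A M]
    (hF : IsSMulRegular F r) {p : F →ₗ[B] M} (hp : Function.Surjective p) :
    ∃ j : M →ₗ[A] A ⊗[B] p.ker, Function.Injective j ∧
      Function.Exact j (p.ker.subtype.baseChange A) := by
  have hrA : algebraMap B A r = 0 := by
    rw [← RingHom.mem_ker, hker]
    exact Ideal.mem_span_singleton_self r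
  have hrM (m : M) : r • m = 0 := by rw [← algebraMap_smul A r m, hrA, zero_smul]
  let φ₀ : F →ₗ[B] p.ker := (r • LinearMap.id).codRestrict p.ker fun x ↦ by simp [hrM]
  have hφ₀ (x : F) : (φ₀ x : F) = r • x := rfl
  let φ : F →ₗ[B] A ⊗[B] p.ker := TensorProduct.mk B A p.ker 1 ∘ₗ φ₀
  have hφ : p.ker ≤ φ.ker := by
    intro x hx
    have : φ₀ x = r • (⟨x, hx⟩ : p.ker) := rfl
    change (1 : A) ⊗ₜ φ₀ x = 0
    rw [this, TensorProduct.tmul_smul, TensorProduct.smul_tmul', Algebra.smul_def, hrA, zero_mul,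
      TensorProduct.zero_tmul]
  let j₀ : M →ₗ[B] A ⊗[B] p.ker :=
    p.ker.liftQ φ hφ ∘ₗ (p.quotKerEquivOfSurjective hp).symm.toLinearMap
  have hj (x : F) : j₀ (p x) = (1 : A) ⊗ₜ φ₀ x := by
    have : (p.quotKerEquivOfSurjective hp).symm (p x) = p.ker.mkQ x := by
      rw [LinearEquiv.symm_apply_eq]; rfl
    simp only [j₀, LinearMap.comp_apply, LinearEquiv.coe_coe, this]
    rfl
  refine ⟨j₀.extendScalarsOfSurjective hA, ?_, ?_⟩
  · rw [injective_iff_map_eq_zero]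
    intro m hm
    obtain ⟨x, rfl⟩ := hp m
    replace hm : (1 : A) ⊗ₜ φ₀ x = 0 := (hj x).symm.trans hm
    obtain ⟨y, hy⟩ := exists_smul_eq_of_one_tmul_eq_zero hA hker hm
    have : r • (y : F) = r • x := congrArg Subtype.val hy
    rw [← hF this]
    exact y.2
  · intro t
    obtain ⟨y, rfl⟩ := TensorProduct.mk_surjective B p.ker A hA t
    refine ⟨fun h ↦ ?_, ?_⟩
    · replace h : (1 : A) ⊗ₜ[B] (y : F) = 0 := h
      obtain ⟨x, hx⟩ := exists_smul_eq_of_one_tmul_eq_zero hA hker h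
      refine ⟨p x, (hj x).trans ?_⟩
      have : φ₀ x = y := Subtype.ext hx
      rw [this]; rfl
    · rintro ⟨m, hm⟩
      obtain ⟨x, rfl⟩ := hp m
      rw [← hm]
      change p.ker.subtype.baseChange A (j₀ (p x)) = 0
      rw [hj, LinearMap.baseChange_tmul]
      change (1 : A) ⊗ₜ (r • x) = 0
      rw [TensorProduct.tmul_smul, TensorProduct.smul_tmul', Algebra.smul_def, hrA, zero_mul,
        TensorProduct.zero_tmul]

/-- Reduction of Tor-rigidity at infinity from `A = B ⧸ (r)` to `B`. -/
lemma of_eventually_of_ker {r : B} (hA : Function.Surjective (algebraMap B A))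
    (hker : RingHom.ker (algebraMap B A) = Ideal.span {r}) (hr : IsSMulRegular B r)
    {F M N : Type u} [AddCommGroup F] [Module B F] [Module.Flat B F] [AddCommGroup M]
    [Module B M] [Module A M] [IsScalarTower B A M] [AddCommGroup N] [Module B N] [Module A N]
    [IsScalarTower B A N] (hF : IsSMulRegular F r) {p : F →ₗ[B] M} (hp : Function.Surjective p)
    (ih : (∃ n, ∀ i, n ≤ i → TorVanishes B p.ker N (i + 1)) → ∀ i, TorVanishes B p.ker N (i + 1))
    (h : ∃ n, ∀ i, n ≤ i → TorVanishes A M N (i + 1)) (i : ℕ) : TorVanishes A M N (i + 1) := by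
  obtain ⟨j, hj, hjk⟩ := exists_exact_baseChange_ker hA hker hF hp
  let q : A ⊗[B] F →ₗ[A] M := p.liftBaseChange A
  have hq : Function.Surjective q := by
    intro m
    obtain ⟨x, rfl⟩ := hp m
    exact ⟨1 ⊗ₜ x, by simp [q]⟩
  let g : A ⊗[B] p.ker →ₗ[A] q.ker := (p.ker.subtype.baseChange A).codRestrict q.ker fun t ↦ by
    obtain ⟨y, rfl⟩ := TensorProduct.mk_surjective B p.ker A hA t
    have : p y = 0 := y.2
    simp [q, this]
  have hg : Function.Surjective g := by
    rintro ⟨t, ht⟩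
    obtain ⟨y, rfl⟩ := TensorProduct.mk_surjective B F A hA t
    have hy : p y = 0 := by simpa [q] using ht
    exact ⟨1 ⊗ₜ ⟨y, hy⟩, rfl⟩
  have hjg : Function.Exact j g := by
    intro t
    rw [← hjk t, Subtype.ext_iff]
    rfl
  have hqk : Function.Exact q.ker.subtype q := LinearMap.exact_subtype_ker_map q
  have hshift (i : ℕ) : TorVanishes A M N (i + 2) ↔ TorVanishes A q.ker N (i + 1) :=
    succ_succ_iff (Submodule.subtype_injective _) hqk hq i
  have hK : IsSMulRegular p.ker r := hF.submodule p.ker r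
  have hbc := baseChange_iff p.ker N (of_isSMulRegular hA hker hr hK)
  obtain ⟨n, hn⟩ := h
  have hmid : ∀ i, TorVanishes B p.ker N (i + 1) := ih ⟨n, fun i hi ↦ (hbc i).mp <|
    middle hj hjg hg (hn i hi) ((hshift i).mp (hn (i + 1) (by lia)))⟩
  have hdown (i : ℕ) (hi : TorVanishes A M N (i + 2 + 1)) : TorVanishes A M N (i + 1) :=
    left hj hjg hg ((hshift (i + 1)).mp hi) ((hbc i).mpr (hmid i))
  have hall (k : ℕ) : ∀ i, n ≤ i + 2 * k → TorVanishes A M N (i + 1) := by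
    induction k with
    | zero => exact fun i hi ↦ hn i hi
    | succ k ih => exact fun i hi ↦ hdown i (ih (i + 2) (by lia))
  exact hall n i (by lia)

end BaseChange

end TorVanishes

section ProjectiveDimension

/-- The projective dimension of the `A`-module `M` is at most `n`, for unbundled modules. -/
abbrev ProjDimLE (A : Type u) [CommRing A] (M : Type u) [AddCommGroup M] [Module A M] (n : ℕ) :
    Prop :=
  HasProjectiveDimensionLE (ModuleCat.of A M) n

namespace ProjDimLE

section

variable {A : Type u} [CommRing A] {X Y Z : Type u} [AddCommGroup X] [Module A X]
  [AddCommGroup Y] [Module A Y] [AddCommGroup Z] [Module A Z] {f : X →ₗ[A] Y} {g : Y →ₗ[A] Z}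

lemma middle (hf : Function.Injective f) (hfg : Function.Exact f g)
    (hg : Function.Surjective g) {n : ℕ} (hX : ProjDimLE A X n) (hZ : ProjDimLE A Z n) :
    ProjDimLE A Y n := by
  obtain ⟨h, hS⟩ := exists_shortExact_ofHom hf hfg hg
  exact hS.hasProjectiveDimensionLT_X₂ _ hX hZ

lemma right (hf : Function.Injective f) (hfg : Function.Exact f g)
    (hg : Function.Surjective g) {n : ℕ} (hX : ProjDimLE A X n) (hY : ProjDimLE A Y (n + 1)) :
    ProjDimLE A Z (n + 1) := by
  obtain ⟨h, hS⟩ := exists_shortExact_ofHom hf hfg hg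
  exact hS.hasProjectiveDimensionLT_X₃ _ hX hY

lemma left (hf : Function.Injective f) (hfg : Function.Exact f g)
    (hg : Function.Surjective g) {n : ℕ} (hY : ProjDimLE A Y n) (hZ : ProjDimLE A Z (n + 1)) :
    ProjDimLE A X n := by
  obtain ⟨h, hS⟩ := exists_shortExact_ofHom hf hfg hg
  exact hS.hasProjectiveDimensionLT_X₁ _ hY hZ

lemma mono {m n : ℕ} (hmn : m ≤ n) (h : ProjDimLE A X m) : ProjDimLE A X n :=
  hasProjectiveDimensionLT_of_ge _ _ _ (Nat.succ_le_succ hmn)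

lemma of_linearEquiv (e : X ≃ₗ[A] Y) {n : ℕ} (h : ProjDimLE A X n) : ProjDimLE A Y n :=
  hasProjectiveDimensionLT_of_iso e.toModuleIso _

lemma of_retract (i : X →ₗ[A] Y) (r : Y →ₗ[A] X) (hir : r ∘ₗ i = LinearMap.id) {n : ℕ}
    (h : ProjDimLE A Y n) : ProjDimLE A X n :=
  Retract.hasProjectiveDimensionLT (Y := ModuleCat.of A Y)
    ⟨ModuleCat.ofHom i, ModuleCat.ofHom r, by rw [← ModuleCat.ofHom_comp, hir]; rfl⟩ _

lemma zero_iff_projective : ProjDimLE A X 0 ↔ Module.Projective A X := by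
  rw [IsProjective.iff_projective, projective_iff_hasProjectiveDimensionLE_zero]

lemma of_projective [Module.Projective A X] (n : ℕ) : ProjDimLE A X n :=
  (zero_iff_projective.mpr ‹_›).mono n.zero_le

lemma pi {n : ℕ} (h : ProjDimLE A X n) (k : ℕ) : ProjDimLE A (Fin k → X) n := by
  induction k with
  | zero =>
    have : Module.Projective A (Fin 0 → X) := Module.Projective.of_free
    exact of_projective n
  | succ k ih =>
    refine of_linearEquiv (Fin.consLinearEquiv A fun _ ↦ X) ?_
    exact middle LinearMap.inl_injective Function.Exact.inl_snd LinearMap.snd_surjective h ih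

end

lemma restrictScalars {A B : Type u} [CommRing A] [CommRing B] [Algebra A B] [IsNoetherianRing B]
    {c : ℕ} (hB : ProjDimLE A B c) (n : ℕ) (V : Type u) [AddCommGroup V] [Module B V]
    [Module A V] [IsScalarTower A B V] [Module.Finite B V] (hV : ProjDimLE B V n) :
    ProjDimLE A V (n + c) := by
  induction n generalizing V with
  | zero =>
    rw [zero_add]
    have := zero_iff_projective.mp hV
    obtain ⟨k, f, g, -, -, hfg⟩ := Module.Finite.exists_comp_eq_id_of_projective B V
    refine of_retract (g.restrictScalars A) (f.restrictScalars A) ?_ (hB.pi k)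
    ext x
    exact LinearMap.congr_fun hfg x
  | succ n ih =>
    obtain ⟨k, p, hp⟩ := Module.Finite.exists_fin' B V
    have hk := Submodule.subtype_injective p.ker
    have hkp : Function.Exact p.ker.subtype p := LinearMap.exact_subtype_ker_map p
    have hK : ProjDimLE A p.ker (n + c) := ih p.ker (left hk hkp hp (of_projective n) hV)
    rw [Nat.add_right_comm]
    exact right (f := p.ker.subtype.restrictScalars A) (g := p.restrictScalars A) hk hkp hp hK
      ((hB.pi k).mono (by lia))

end ProjDimLE

end ProjectiveDimension

section RegularLocal

open IsLocalRing

variable {Q : Type u} [CommRing Q] [IsLocalRing Q] [IsNoetherianRing Q]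

/-- A regular parameter avoiding the minimal primes. -/
lemma exists_regular_parameter {s : Finset Q} (hs : Ideal.span (s : Set Q) = maximalIdeal Q)
    (hdim : 0 < ringKrullDim Q) : ∃ (x : Q) (t : Finset Q), t.card + 1 ≤ s.card ∧
      Ideal.span (insert x (t : Set Q)) = maximalIdeal Q ∧ ∀ p ∈ minimalPrimes Q, x ∉ p := by
  classical
  rw [← maximalIdeal_height_eq_ringKrullDim] at hdim
  replace hdim : (maximalIdeal Q).height ≠ 0 := by
    rintro h
    simp [h] at hdim
  have hmin : maximalIdeal Q ∉ minimalPrimes Q := fun h ↦ hdim (Ideal.height_eq_zero_iff.mpr h)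
  have hsq : ¬ maximalIdeal Q ≤ maximalIdeal Q ^ 2 := by
    intro h
    have h0 : maximalIdeal Q = ⊥ := by
      refine Submodule.eq_bot_of_le_smul_of_le_jacobson_bot (maximalIdeal Q) (maximalIdeal Q)
        (IsNoetherian.noetherian _) ?_ (maximalIdeal_le_jacobson _)
      rwa [smul_eq_mul, ← sq]
    have := (isField_iff_maximalIdeal_eq.mpr h0).isDomain
    exact hdim (by rw [h0]; exact Ideal.height_bot)
  have hne : ¬ (maximalIdeal Q : Set Q) ⊆
      ⋃ p ∈ insert (maximalIdeal Q ^ 2) (minimalPrimes Q), (p : Set Q) := by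
    rw [Ideal.subset_union_prime_finite (f := fun p ↦ p)
      ((minimalPrimes.finite_of_isNoetherianRing Q).insert _) (maximalIdeal Q ^ 2)
      (maximalIdeal Q ^ 2)]
    · rintro ⟨p, rfl | hp, hle⟩
      · exact hsq hle
      · have := hp.1.1
        exact hmin (le_antisymm hle (le_maximalIdeal this.ne_top) ▸ hp)
    · rintro p (rfl | hp) hp1 -
      · exact absurd rfl hp1
      · exact hp.1.1
  obtain ⟨x, hxm, hx⟩ := Set.not_subset.mp hne
  simp only [Set.mem_iUnion, not_exists, Set.mem_insert_iff, SetLike.mem_coe] at hx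
  have hx2 := hx _ (Or.inl rfl)
  obtain ⟨a, -, ha⟩ := Submodule.mem_span_finset.mp (hs.symm ▸ hxm)
  obtain ⟨y, hy, hay⟩ : ∃ y ∈ s, a y ∉ maximalIdeal Q := by
    by_contra! h
    apply hx2
    rw [← ha, sq]
    exact Ideal.sum_mem _ fun y hy ↦ Ideal.mul_mem_mul (h y hy) (hs ▸ Ideal.subset_span hy)
  rw [mem_maximalIdeal, mem_nonunits_iff, not_not] at hay
  refine ⟨x, s.erase y, (Finset.card_erase_add_one hy).le, ?_, fun p hp ↦ hx p (Or.inr hp)⟩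
  have hle : Ideal.span (s : Set Q) ≤ maximalIdeal Q := hs.le
  rw [Ideal.span_le] at hle
  apply le_antisymm
  · rw [Ideal.span_le, Set.insert_subset_iff]
    exact ⟨hxm, fun z hz ↦ hle (Finset.mem_of_mem_erase hz)⟩
  · rw [← hs, Ideal.span_le]
    intro z hz
    set I := Ideal.span (insert x (s.erase y : Set Q))
    have herase {z : Q} (hz : z ∈ s.erase y) : z ∈ I := Ideal.subset_span (Or.inr hz)
    by_cases hzy : z = y
    · subst hzy
      have hxI : x ∈ I := Ideal.subset_span (Or.inl rfl)
      simp only [← ha, ← Finset.add_sum_erase s _ hy, smul_eq_mul] at hxI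
      rw [I.add_mem_iff_left (I.sum_mem fun w hw ↦ I.mul_mem_left _ (herase hw))] at hxI
      exact (Ideal.unit_mul_mem_iff_mem I hay).mp hxI
    · exact herase (Finset.mem_erase.mpr ⟨hzy, hz⟩)

lemma projDimLE_quotient_span_singleton {A : Type u} [CommRing A] {x : A}
    (hx : IsSMulRegular A x) : ProjDimLE A (A ⧸ Ideal.span {x}) 1 := by
  have hk : Function.Injective (LinearMap.toSpanSingleton A A x) := by
    intro y z hyz
    apply hx
    simpa [mul_comm] using hyz
  refine ProjDimLE.right hk (g := (Ideal.span {x}).mkQ) ?_ (Submodule.mkQ_surjective _)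
    (.of_projective 0) (.of_projective 1)
  intro y
  rw [Submodule.mkQ_apply, Submodule.Quotient.mk_eq_zero, Ideal.mem_span_singleton']
  simp

/-- If `(x)` is prime and `x` avoids the minimal primes, then the ring is a domain. -/
lemma isDomain_of_isPrime_span_singleton {x : Q} (hxm : x ∈ maximalIdeal Q)
    (hx : ∀ p ∈ minimalPrimes Q, x ∉ p) (hprime : (Ideal.span {x}).IsPrime) : IsDomain Q := by
  obtain ⟨p, hp, hpx⟩ := Ideal.exists_minimalPrimes_le (bot_le : ⊥ ≤ Ideal.span {x})
  have hpp : p.IsPrime := hp.1.1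
  have : p = ⊥ := by
    refine Submodule.eq_bot_of_le_smul_of_le_jacobson_bot (maximalIdeal Q) p
      (IsNoetherian.noetherian _) ?_ (maximalIdeal_le_jacobson _)
    intro y hy
    obtain ⟨z, rfl⟩ := Ideal.mem_span_singleton.mp (hpx hy)
    exact Ideal.mul_mem_mul hxm ((hpp.mem_or_mem hy).resolve_left (hx p hp))
  subst this
  exact IsDomain.of_bot_isPrime Q

/-- Regular local rings are domains of finite global dimension. -/
lemma isDomain_and_projDimLE (d : ℕ) (Q : Type u) [CommRing Q] [IsLocalRing Q]
    [IsNoetherianRing Q] (s : Finset Q) (hs : Ideal.span (s : Set Q) = maximalIdeal Q)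
    (hcard : s.card ≤ d) (hdim : d ≤ ringKrullDim Q) : IsDomain Q ∧
      ∀ (L : Type u) [AddCommGroup L] [Module Q L] [Module.Finite Q L], ProjDimLE Q L d := by
  classical
  induction d generalizing Q with
  | zero =>
    obtain rfl : s = ∅ := by simpa using hcard
    have hfield : IsField Q := isField_iff_maximalIdeal_eq.mpr (by simpa using hs.symm)
    refine ⟨hfield.isDomain, fun L _ _ _ ↦ ?_⟩
    let := hfield.toField
    have : Module.Projective Q L := Module.Projective.of_free
    exact .of_projective 0
  | succ d ih =>
    obtain ⟨x, t, ht, hxt, hx⟩ := exists_regular_parameter hs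
      (lt_of_lt_of_le (by exact_mod_cast d.succ_pos) hdim)
    have hxm : x ∈ maximalIdeal Q := hxt ▸ Ideal.subset_span (Or.inl rfl)
    let Q' := Q ⧸ Ideal.span {x}
    have : Nontrivial Q' := Ideal.Quotient.nontrivial_iff.mpr fun h ↦
      (maximalIdeal.isMaximal Q).ne_top (top_le_iff.mp (h ▸ by simpa [Ideal.span_le] using hxm))
    have : IsLocalRing Q' := .of_surjective' (Ideal.Quotient.mk _) Ideal.Quotient.mk_surjective
    have hdim' : (d : WithBot ℕ∞) ≤ ringKrullDim Q' := by
      have := Ideal.height_le_ringKrullDim_quotient_add_one hxm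
      rw [maximalIdeal_height_eq_ringKrullDim] at this
      exact ENat.WithBot.add_le_add_one_right_iff.mp (le_trans (by exact_mod_cast hdim) this)
    obtain ⟨hdom, hpd⟩ := ih Q' (t.image (Ideal.Quotient.mk _)) (by
      rw [← map_maximalIdeal_of_surjective (Ideal.Quotient.mk (Ideal.span {x}))
        Ideal.Quotient.mk_surjective, ← hxt, Ideal.map_span, Set.image_insert_eq,
        Ideal.Quotient.eq_zero_iff_mem.mpr (Ideal.mem_span_singleton_self x),
        Ideal.span_insert_zero, Finset.coe_image])
      (Finset.card_image_le.trans (by lia)) hdim'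
    have hprime := (Ideal.Quotient.isDomain_iff_prime (Ideal.span {x})).mp hdom
    have hQ := isDomain_of_isPrime_span_singleton hxm hx hprime
    refine ⟨hQ, fun L _ _ _ ↦ ?_⟩
    have hx0 : x ≠ 0 := by
      rintro rfl
      exact hx ⊥ (by simp [IsDomain.minimalPrimes_eq_singleton_bot]) (Submodule.zero_mem _)
    have hreg {V : Type u} [AddCommGroup V] [Module Q V] [Module.IsTorsionFree Q V] :
      IsSMulRegular V x := fun y z hyz ↦ smul_right_injective V hx0 hyz
    obtain ⟨n, p, hp⟩ := Module.Finite.exists_fin' Q L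
    have hK : ProjDimLE Q p.ker d := by
      have : Module.Finite Q' (QuotSMulTop x p.ker) := .of_restrictScalars_finite Q _ _
      have h1 := ProjDimLE.restrictScalars (projDimLE_quotient_span_singleton (hreg (V := Q))) d
        (QuotSMulTop x p.ker) (hpd _)
      have h2 := ModuleCat.projectiveDimension_quotSMulTop_eq_succ_of_isSMulRegular
        (ModuleCat.of Q p.ker) x hreg hxm
      rw [ProjDimLE, ← projectiveDimension_le_iff] at h1 ⊢
      rw [h2] at h1
      exact ENat.WithBot.add_le_add_one_right_iff.mp (by exact_mod_cast h1)
    exact .right (Submodule.subtype_injective _) (LinearMap.exact_subtype_ker_map p) hp hK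
      (.of_projective _)

end RegularLocal

section CompleteIntersection

open IsLocalRing RingTheory.Sequence

lemma projDimLE_quotient_ofList {Q : Type u} [CommRing Q] [IsLocalRing Q] [IsNoetherianRing Q]
    {f : List Q} (hf : IsWeaklyRegular Q f) (hfm : ∀ r ∈ f, r ∈ maximalIdeal Q) :
    ProjDimLE Q (Q ⧸ Ideal.ofList f) f.length := by
  have h := ModuleCat.projectiveDimension_quotient_eq_add_length_of_isWeaklyRegular
    (ModuleCat.of Q Q) f hf hfm
  have h0 : projectiveDimension (ModuleCat.of Q Q) ≤ (0 : ℕ) :=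
    (projectiveDimension_le_iff _ _).mpr (ProjDimLE.of_projective 0)
  refine .of_linearEquiv (Submodule.quotEquivOfEq (Ideal.ofList f • ⊤) (Ideal.ofList f)
    (by simp)) ?_
  rw [ProjDimLE, ← projectiveDimension_le_iff]
  refine h.trans_le ((add_le_add_left h0 _).trans ?_)
  simp

/-- The Auslander–Buchsbaum inequality for maximal Cohen–Macaulay modules over a complete
intersection. -/
lemma projDimLE_of_moduleDepth_eq {Q : Type u} [CommRing Q] [IsLocalRing Q]
    (hQ : IsRegularLocal Q) {f : List Q} (hfm : ∀ r ∈ f, r ∈ maximalIdeal Q)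
    [IsLocalRing (Q ⧸ Ideal.ofList f)] (M : Type u) [AddCommGroup M]
    [Module (Q ⧸ Ideal.ofList f) M] [Module Q M] [IsScalarTower Q (Q ⧸ Ideal.ofList f) M]
    [Module.Finite Q M]
    (hM : (moduleDepth (Q ⧸ Ideal.ofList f) M : WithBot ℕ∞) =
      ringKrullDim (Q ⧸ Ideal.ofList f)) : ProjDimLE Q M f.length := by
  classical
  obtain ⟨_, s, hs, hdim⟩ := hQ
  have hgl := (isDomain_and_projDimLE s.card Q s hs le_rfl hdim.le).2
  rcases subsingleton_or_nontrivial M with _ | _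
  · exact .of_projective _
  have hle : ringKrullDim Q ≤ ringKrullDim (Q ⧸ Ideal.ofList f) + f.length := by
    have h : Ideal.ofList f = Ideal.span (f.toFinset : Set Q) := by simp [Ideal.ofList]
    rw [h]
    refine (ringKrullDim_le_ringKrullDim_quotient_add_card f.toFinset ?_).trans ?_
    · rw [ringJacobson_eq_maximalIdeal]
      intro r hr
      exact hfm r (by simpa using hr)
    · gcongr
      exact List.toFinset_card_le f
  have hltop : moduleDepth (Q ⧸ Ideal.ofList f) M ≠ ⊤ := by
    intro h
    have := ringKrullDim_quotient_le (Ideal.ofList f)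
    rw [← hM, h, ← hdim] at this
    exact ENat.natCast_ne_top s.card (top_le_iff.mp (WithBot.coe_le_coe.mp this))
  obtain ⟨e, he⟩ := ENat.ne_top_iff_exists.mp hltop
  obtain ⟨rs, hrs, hrsm, hreg⟩ : ∃ rs : List (Q ⧸ Ideal.ofList f), e ≤ rs.length ∧
      (∀ x ∈ rs, x ∈ maximalIdeal (Q ⧸ Ideal.ofList f)) ∧ IsWeaklyRegular M rs := by
    rcases e with _ | e
    · exact ⟨[], by simp, by simp, IsWeaklyRegular.nil _ M⟩
    · have : (e : ℕ∞) < moduleDepth (Q ⧸ Ideal.ofList f) M := by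
        rw [← he]; exact_mod_cast e.lt_succ_self
      obtain ⟨_, ⟨rs, rfl, hrsm, hreg⟩, hlt⟩ := lt_sSup_iff.mp this
      exact ⟨rs, by exact_mod_cast hlt, hrsm, hreg.toIsWeaklyRegular⟩
  obtain ⟨rs, rfl⟩ := List.map_surjective_iff.mpr
    (Ideal.Quotient.mk_surjective (I := Ideal.ofList f)) rs
  have hmem : ∀ x ∈ rs, x ∈ maximalIdeal Q := by
    intro x hx
    have := hrsm _ (List.mem_map_of_mem hx)
    rw [mem_maximalIdeal, mem_nonunits_iff] at this ⊢
    exact fun h ↦ this (h.map _)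
  replace hreg := (isWeaklyRegular_map_algebraMap_iff (Q ⧸ Ideal.ofList f) M rs).mp hreg
  have hpd := ModuleCat.projectiveDimension_quotient_eq_add_length_of_isWeaklyRegular
    (ModuleCat.of Q M) rs hreg hmem
  have hpd' := (projectiveDimension_le_iff _ _).mpr
    (hgl (M ⧸ Ideal.ofList rs • (⊤ : Submodule Q M)))
  rw [ProjDimLE, ← projectiveDimension_le_iff]
  rw [List.length_map] at hrs
  rw [← hM, ← he, ← hdim] at hle
  refine ENat.WithBot.add_le_add_natCast_right_iff.mp ((hpd.symm.trans_le hpd').trans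
    (hle.trans ?_))
  rw [add_comm]
  gcongr
  exact_mod_cast hrs

lemma flat_of_bijective_algebraMap {Q A : Type u} [CommRing Q] [CommRing A] [Algebra Q A]
    (h : Function.Bijective (algebraMap Q A)) (M : Type u) [AddCommGroup M] [Module A M]
    [Module Q M] [IsScalarTower Q A M] [Module.Projective Q M] : Module.Flat A M := by
  let e := RingEquiv.ofBijective (algebraMap Q A) h
  have := RingHomInvPair.of_ringEquiv e
  have := RingHomInvPair.symm (e : Q →+* A) (e.symm : A →+* Q)
  let e' : M ≃ₛₗ[(e : Q →+* A)] M :=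
    { AddEquiv.refl M with map_smul' := fun q m ↦ (algebraMap_smul A q m).symm }
  have := Module.Projective.of_equiv e'
  infer_instance

/-- Over `A = Q ⧸ (f)` with `f` a regular sequence, eventual vanishing of Tor implies vanishing of
Tor for modules of projective dimension at most the length of `f` over `Q`. -/
lemma TorVanishes.of_eventually_of_projDimLE {Q : Type u} [CommRing Q] [IsLocalRing Q]
    [IsNoetherianRing Q] {f : List Q} (hf : IsWeaklyRegular Q f)
    (hfm : ∀ r ∈ f, r ∈ maximalIdeal Q) {A : Type u} [CommRing A] [Algebra Q A]
    (hA : Function.Surjective (algebraMap Q A))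
    (hker : RingHom.ker (algebraMap Q A) = Ideal.ofList f) (M N : Type u) [AddCommGroup M]
    [Module A M] [Module Q M] [IsScalarTower Q A M] [Module.Finite Q M] [AddCommGroup N]
    [Module A N] (hM : ProjDimLE Q M f.length)
    (h : ∃ n, ∀ i, n ≤ i → TorVanishes A M N (i + 1)) (i : ℕ) : TorVanishes A M N (i + 1) := by
  induction f using List.reverseRecOn generalizing A M i with
  | nil =>
    have := ProjDimLE.zero_iff_projective.mp hM
    have := flat_of_bijective_algebraMap
      ⟨(RingHom.injective_iff_ker_eq_bot _).mpr (by rw [hker, Ideal.ofList_nil]), hA⟩ M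
    exact of_flat M N i
  | append_singleton g r ih =>
    rw [isWeaklyRegular_append_iff, isWeaklyRegular_singleton_iff] at hf
    obtain ⟨hg, hr⟩ := hf
    have hgm (x : Q) (hx : x ∈ g) : x ∈ maximalIdeal Q := hfm x (List.mem_append_left _ hx)
    rw [Ideal.ofList_append, Ideal.ofList_singleton] at hker
    let B := Q ⧸ Ideal.ofList g
    have hgk : Ideal.ofList g ≤ RingHom.ker (algebraMap Q A) := hker ▸ le_sup_left
    let _ : Algebra B A := (Ideal.Quotient.lift _ (algebraMap Q A) hgk).toAlgebra
    have : IsScalarTower Q B A := .of_algebraMap_eq fun x ↦ rfl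
    let _ : Module B M := Module.compHom M (algebraMap B A)
    let _ : Module B N := Module.compHom N (algebraMap B A)
    have : IsScalarTower B A M := .of_algebraMap_smul fun _ _ ↦ rfl
    have : IsScalarTower B A N := .of_algebraMap_smul fun _ _ ↦ rfl
    have : IsScalarTower Q B M := .of_algebraMap_smul fun q m ↦ algebraMap_smul A q m
    have : Module.Finite B M := .of_restrictScalars_finite Q B M
    have hBA : Function.Surjective (algebraMap B A) :=
      Ideal.Quotient.lift_surjective_of_surjective _ hgk hA
    have hkerB : RingHom.ker (algebraMap B A) = Ideal.span {algebraMap Q B r} := by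
      refine (Ideal.ker_quotient_lift (algebraMap Q A) hgk).trans ?_
      rw [hker, Ideal.map_sup, Ideal.map_quotient_self, bot_sup_eq, Ideal.map_span,
        Set.image_singleton]
      rfl
    have hrB : IsSMulRegular B (algebraMap Q B r) := by
      rw [isSMulRegular_algebraMap_iff]
      have e := Submodule.quotEquivOfEq (Ideal.ofList g • ⊤) (Ideal.ofList g) (by simp)
      exact (LinearEquiv.isSMulRegular_congr e r).mp hr
    obtain ⟨n, p, hp⟩ := Module.Finite.exists_fin' B M
    have hpK : ProjDimLE Q p.ker g.length := by
      refine .left (f := p.ker.subtype.restrictScalars Q) (g := p.restrictScalars Q)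
        (Submodule.subtype_injective _) (LinearMap.exact_subtype_ker_map p) hp
        ((projDimLE_quotient_ofList hg hgm).pi n) ?_
      simpa using hM
    have : Module.Finite Q p.ker := .trans B _
    exact of_eventually_of_ker hBA hkerB hrB (IsSMulRegular.pi fun _ ↦ hrB) hp
      (fun h ↦ ih hg hgm Ideal.Quotient.mk_surjective (Ideal.mk_ker) p.ker hpK h) h i

lemma TorVanishes.of_eventually_of_moduleDepth_eq {Q : Type u} [CommRing Q] [IsLocalRing Q]
    (hQ : IsRegularLocal Q) {f : List Q} (hf : IsRegular Q f)
    [IsLocalRing (Q ⧸ Ideal.ofList f)] (M N : Type u) [AddCommGroup M]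
    [Module (Q ⧸ Ideal.ofList f) M] [Module.Finite (Q ⧸ Ideal.ofList f) M] [AddCommGroup N]
    [Module (Q ⧸ Ideal.ofList f) N]
    (hM : (moduleDepth (Q ⧸ Ideal.ofList f) M : WithBot ℕ∞) =
      ringKrullDim (Q ⧸ Ideal.ofList f))
    (h : ∃ n, ∀ i, n ≤ i → TorVanishes (Q ⧸ Ideal.ofList f) M N (i + 1)) (i : ℕ) :
    TorVanishes (Q ⧸ Ideal.ofList f) M N (i + 1) := by
  have hfm (x : Q) (hx : x ∈ f) : x ∈ maximalIdeal Q := by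
    apply le_maximalIdeal hf.2.symm
    rw [smul_eq_mul, Ideal.mul_top]
    exact Ideal.subset_span hx
  have := hQ.1
  let _ : Module Q M := Module.compHom M (Ideal.Quotient.mk (Ideal.ofList f))
  have : IsScalarTower Q (Q ⧸ Ideal.ofList f) M := .of_algebraMap_smul fun _ _ ↦ rfl
  have : Module.Finite Q M := .trans (Q ⧸ Ideal.ofList f) M
  exact of_eventually_of_projDimLE hf.toIsWeaklyRegular hfm Ideal.Quotient.mk_surjective
    Ideal.mk_ker M N (projDimLE_of_moduleDepth_eq hQ hfm M hM) h i

end CompleteIntersection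

theorem stmt_3 (Q : Type u) [CommRing Q] [IsLocalRing Q] (hQ : IsRegularLocal Q)
    (f : List Q) (hf : RingTheory.Sequence.IsRegular Q f)
    [IsLocalRing (Q ⧸ Ideal.ofList f)]
    (M N : ModuleCat.{u} (Q ⧸ Ideal.ofList f))
    [Module.Finite (Q ⧸ Ideal.ofList f) M] [Module.Finite (Q ⧸ Ideal.ofList f) N]
    (hMCM : (moduleDepth (Q ⧸ Ideal.ofList f) M : WithBot ℕ∞) =
        ringKrullDim (Q ⧸ Ideal.ofList f) ∨
      (moduleDepth (Q ⧸ Ideal.ofList f) N : WithBot ℕ∞) = ringKrullDim (Q ⧸ Ideal.ofList f))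
    (htor : ∃ n : ℕ, ∀ i : ℕ, n ≤ i →
      IsZero (((Tor (ModuleCat.{u} (Q ⧸ Ideal.ofList f)) i).obj M).obj N)) :
    ∀ i : ℕ, 0 < i →
      IsZero (((Tor (ModuleCat.{u} (Q ⧸ Ideal.ofList f)) i).obj M).obj N) := by
  obtain ⟨n, hn⟩ := htor
  have htor' (i : ℕ) (hi : n ≤ i) : TorVanishes (Q ⧸ Ideal.ofList f) M N (i + 1) :=
    hn (i + 1) (by lia)
  rintro (_ | i) hi
  · exact absurd hi (lt_irrefl 0)
  rcases hMCM with hM | hN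
  · exact TorVanishes.of_eventually_of_moduleDepth_eq hQ hf M N hM ⟨n, htor'⟩ i
  · exact (TorVanishes.of_eventually_of_moduleDepth_eq hQ hf N M hN
      ⟨n, fun i hi ↦ (htor' i hi).symm⟩ i).symm
end

section
/- Let Q be a regular local ring, f₁,…,f_c a Q-regular sequence, and R = Q/(f₁,…,f_c) (a local complete intersection of codimension c). Let M₁,…,M_{c+1} be nonfree maximal Cohen–Macaulay R-modules. Then there exists i ∈ {1,…,c} such that Tor_n^R(M₁ ⊗_R ⋯ ⊗_R M_i, M_{i+1}) ≠ 0 for infinitely many n. -/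
/-!
STATEMENT 4: Over a local complete intersection `R = Q ⧸ (f₁, …, f_c)` of codimension `c`,
given nonfree maximal Cohen–Macaulay `R`-modules `M₁, …, M_{c+1}` (here indexed `M 0, …, M c`),
there is an `i ∈ {1, …, c}` such that `Tor_n^R(M 0 ⊗ ⋯ ⊗ M (i-1), M i) ≠ 0` for infinitely
many `n`.
-/

open CategoryTheory CategoryTheory.Limits

universe u

/-- `tensorUpTo R M i = M 0 ⊗ M 1 ⊗ ⋯ ⊗ M i`. -/
noncomputable def tensorUpTo (R : Type u) [CommRing R] (M : ℕ → ModuleCat.{u} R) :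
    ℕ → ModuleCat.{u} R
  | 0 => M 0
  | n + 1 => MonoidalCategory.tensorObj (tensorUpTo R M n) (M (n + 1))

section ExtSequences

open Abelian

variable {R : Type u} [CommRing R]

/-- Precomposition with a morphism, as a linear map on `Ext` groups. -/
noncomputable def extPrecomp {X Y : ModuleCat.{u} R} (f : X ⟶ Y) (L : ModuleCat.{u} R) (n : ℕ) :
    Ext Y L n →ₗ[R] Ext X L n :=
  Ext.bilinearCompOfLinear R X Y L 0 n n (zero_add n) (Ext.mk₀ f)

/-- The connecting map of the contravariant long exact `Ext` sequence, as a linear map. -/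
noncomputable def extConnecting {S : ShortComplex (ModuleCat.{u} R)} (hS : S.ShortExact)
    (L : ModuleCat.{u} R) (n : ℕ) : Ext S.X₁ L n →ₗ[R] Ext S.X₃ L (n + 1) :=
  Ext.bilinearCompOfLinear R S.X₃ S.X₁ L 1 n (n + 1) (add_comm 1 n) hS.extClass

lemma extPrecomp_apply {X Y : ModuleCat.{u} R} (f : X ⟶ Y) (L : ModuleCat.{u} R) (n : ℕ)
    (x : Ext Y L n) : extPrecomp f L n x = (Ext.mk₀ f).comp x (zero_add n) := rfl

lemma extConnecting_apply {S : ShortComplex (ModuleCat.{u} R)} (hS : S.ShortExact)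
    (L : ModuleCat.{u} R) (n : ℕ) (x : Ext S.X₁ L n) :
    extConnecting hS L n x = hS.extClass.comp x (add_comm 1 n) := rfl

variable {S : ShortComplex (ModuleCat.{u} R)}

lemma extPrecomp_exact (hS : S.ShortExact) (L : ModuleCat.{u} R) (n : ℕ) :
    Function.Exact (extPrecomp S.g L n) (extPrecomp S.f L n) := by
  intro x
  refine ⟨fun hx ↦ Ext.contravariant_sequence_exact₂ hS L x hx, ?_⟩
  rintro ⟨y, rfl⟩
  simp [extPrecomp_apply]

lemma extPrecomp_extConnecting_exact (hS : S.ShortExact) (L : ModuleCat.{u} R) (n : ℕ) :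
    Function.Exact (extPrecomp S.f L n) (extConnecting hS L n) := by
  intro x
  refine ⟨fun hx ↦ Ext.contravariant_sequence_exact₁ hS L x (add_comm 1 n) hx, ?_⟩
  rintro ⟨y, rfl⟩
  simp [extPrecomp_apply, extConnecting_apply]

lemma extConnecting_extPrecomp_exact (hS : S.ShortExact) (L : ModuleCat.{u} R) (n : ℕ) :
    Function.Exact (extConnecting hS L n) (extPrecomp S.g L (n + 1)) := by
  intro x
  refine ⟨fun hx ↦ Ext.contravariant_sequence_exact₃ hS L x hx (add_comm 1 n), ?_⟩
  rintro ⟨y, rfl⟩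
  simp [extPrecomp_apply, extConnecting_apply]

lemma extConnecting_surjective (hS : S.ShortExact) (L : ModuleCat.{u} R) (n : ℕ)
    [Projective S.X₂] :
    Function.Surjective (extConnecting hS L n) :=
  precomp_extClass_surjective_of_projective_X₂ L hS n

lemma extConnecting_injective (hS : S.ShortExact) (L : ModuleCat.{u} R) (n : ℕ)
    [Projective S.X₂] :
    Function.Injective (extConnecting hS L (n + 1)) := by
  rw [injective_iff_map_eq_zero]
  intro x hx
  obtain ⟨y, rfl⟩ := (extPrecomp_extConnecting_exact hS L (n + 1) x).1 hx
  rw [Ext.eq_zero_of_projective y, map_zero]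

lemma Module.length_le_add_of_exact {M₁ M₂ M₃ : Type*} [AddCommGroup M₁] [AddCommGroup M₂]
    [AddCommGroup M₃] [Module R M₁] [Module R M₂] [Module R M₃] {f : M₁ →ₗ[R] M₂}
    {g : M₂ →ₗ[R] M₃} (h : Function.Exact f g) :
    Module.length R M₂ ≤ Module.length R M₁ + Module.length R M₃ := by
  rw [Module.length_eq_add_of_exact (LinearMap.ker g).subtype g.rangeRestrict
    (Submodule.injective_subtype _) g.surjective_rangeRestrict
    (fun x ↦ by simp [Subtype.ext_iff])]
  gcongr
  · have := LinearMap.exact_iff.mp h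
    rw [this]
    exact Module.length_le_of_surjective _ f.surjective_rangeRestrict
  · exact Module.length_le_of_injective _ (Submodule.injective_subtype _)

lemma subsingleton_ext_of_subsingleton (hS : S.ShortExact) (L : ModuleCat.{u} R) (n : ℕ)
    (h₁ : Subsingleton (Ext S.X₁ L n))
    (h₃ : Subsingleton (Ext S.X₃ L n)) : Subsingleton (Ext S.X₂ L n) := by
  refine subsingleton_of_forall_eq 0 fun x ↦ ?_
  obtain ⟨y, rfl⟩ := (extPrecomp_exact hS L n x).1 (Subsingleton.elim _ _)
  rw [Subsingleton.elim y 0, map_zero]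

lemma subsingleton_ext_X₁_iff (hS : S.ShortExact) (L : ModuleCat.{u} R) (n : ℕ)
    [Projective S.X₂] :
    Subsingleton (Ext S.X₁ L (n + 1)) ↔ Subsingleton (Ext S.X₃ L (n + 2)) :=
  (Equiv.ofBijective _ ⟨extConnecting_injective hS L n,
    extConnecting_surjective hS L (n + 1)⟩).subsingleton_congr

end ExtSequences

section Reducible

open Abelian

variable {R : Type u} [CommRing R]

/-- Finite modules which become projective after `j` reduction steps; a reduction step replaces `X`
by `X'` where `0 → X → X' → F → X → 0` is exact and `F` is finite projective. -/
def IsReducible : ℕ → ModuleCat.{u} R → Prop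
  | 0, X => Module.Finite R X ∧ Module.Projective R X
  | j + 1, X => ∃ S T : ShortComplex (ModuleCat.{u} R), S.ShortExact ∧ T.ShortExact ∧
      S.X₁ = X ∧ T.X₃ = X ∧ S.X₃ = T.X₁ ∧ Module.Finite R T.X₂ ∧ Module.Projective R T.X₂ ∧
      IsReducible j S.X₂

lemma IsReducible.subsingleton_ext {j : ℕ} {X : ModuleCat.{u} R} (hX : IsReducible j X)
    (L : ModuleCat.{u} R) (h : ∀ᶠ n in Filter.atTop, Subsingleton (Ext X L n)) (n : ℕ) :
    Subsingleton (Ext X L (n + 1)) := by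
  induction j generalizing X n with
  | zero =>
    have := hX.2
    exact Ext.subsingleton_of_projective X L n
  | succ j ih =>
    obtain ⟨S, T, hS, hT, rfl, h₁, h₂, -, _, hred⟩ := hX
    have key (n : ℕ) : Subsingleton (Ext S.X₃ L (n + 1)) ↔ Subsingleton (Ext S.X₁ L (n + 2)) := by
      have := subsingleton_ext_X₁_iff hT L n
      rwa [← h₂, h₁] at this
    obtain ⟨N, hN⟩ := Filter.eventually_atTop.1 h
    have hmid (n : ℕ) : Subsingleton (Ext S.X₂ L (n + 1)) := by
      refine ih hred (Filter.eventually_atTop.2 ⟨N + 1, fun n hn ↦ ?_⟩) n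
      obtain ⟨n, rfl⟩ : ∃ m, n = m + 1 := ⟨n - 1, by lia⟩
      exact subsingleton_ext_of_subsingleton hS L _ (hN _ (by lia)) ((key n).2 (hN _ (by lia)))
    have step (n : ℕ) (hn : Subsingleton (Ext S.X₁ L (n + 1 + 2))) :
        Subsingleton (Ext S.X₁ L (n + 1)) := by
      have := (key (n + 1)).2 hn
      refine subsingleton_of_forall_eq 0 fun x ↦ ?_
      obtain ⟨y, rfl⟩ := (extPrecomp_extConnecting_exact hS L (n + 1) x).1 (Subsingleton.elim _ _)
      have := hmid n
      rw [Subsingleton.elim y 0, map_zero]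
    have descend (k : ℕ) : ∀ n, N ≤ n + 2 * k → Subsingleton (Ext S.X₁ L (n + 1)) := by
      induction k with
      | zero => exact fun n hn ↦ hN _ (by lia)
      | succ k ihk => exact fun n hn ↦ step n (ihk (n + 2) (by lia))
    exact descend N n (by lia)

/-- The coefficients of `(1 - t)⁻ʲ`. -/
def iteratedSum : ℕ → ℕ → ℕ
  | 0, n => if n = 0 then 1 else 0
  | j + 1, n => ∑ i ∈ Finset.range (n + 1), iteratedSum j i

lemma one_le_iteratedSum_succ (j n : ℕ) : 1 ≤ iteratedSum (j + 1) n := by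
  induction j generalizing n with
  | zero =>
    rw [iteratedSum]
    exact (Finset.single_le_sum (f := iteratedSum 0) (fun _ _ ↦ Nat.zero_le _)
      (Finset.mem_range.2 n.succ_pos)).trans' (by simp [iteratedSum])
  | succ j ih =>
    rw [iteratedSum]
    exact (Finset.single_le_sum (f := iteratedSum (j + 1)) (fun _ _ ↦ Nat.zero_le _)
      (Finset.mem_range.2 n.succ_pos)).trans' (ih 0)

lemma iteratedSum_succ_eq_choose (j n : ℕ) : iteratedSum (j + 1) n = (n + j).choose j := by
  induction j generalizing n with
  | zero => simp [iteratedSum]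
  | succ j ih =>
    rw [iteratedSum]
    simp_rw [ih]
    have := Nat.sum_range_add_choose n j
    rw [this]
    congr 1

lemma iteratedSum_monotone (j : ℕ) : Monotone (iteratedSum (j + 1)) := by
  refine monotone_nat_of_le_succ fun n ↦ ?_
  rw [iteratedSum, iteratedSum, Finset.sum_range_succ _ (n + 1)]
  exact Nat.le_add_right _ _

lemma exists_mul_iteratedSum_lt (j C : ℕ) : ∃ n, C * iteratedSum j n < iteratedSum (j + 1) n := by
  cases j with
  | zero => exact ⟨1, by simp [iteratedSum]⟩
  | succ j =>
    refine ⟨C * (j + 1), ?_⟩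
    rw [iteratedSum_succ_eq_choose, iteratedSum_succ_eq_choose]
    have h := Nat.add_one_mul_choose_eq (C * (j + 1) + j) j
    have hpos : 0 < (C * (j + 1) + j).choose j := Nat.choose_pos (by lia)
    have : C * (C * (j + 1) + j).choose j * (j + 1) <
        (C * (j + 1) + j + 1).choose (j + 1) * (j + 1) := by
      rw [← h]; nlinarith
    exact lt_of_mul_lt_mul_right this (Nat.zero_le _)

lemma IsReducible.exists_length_ext_le {j : ℕ} {X : ModuleCat.{u} R} (hX : IsReducible j X)
    (L : ModuleCat.{u} R) (hL : ∀ F : ModuleCat.{u} R, Module.Finite R F →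
      Module.length R (F ⟶ L) ≠ ⊤) :
    ∃ C : ℕ, ∀ n, Module.length R (Ext X L n) ≤ (C * iteratedSum j n : ℕ) := by
  induction j generalizing X with
  | zero =>
    obtain ⟨_, _⟩ := hX
    obtain ⟨C, hC⟩ := ENat.ne_top_iff_exists.1 (hL X inferInstance)
    refine ⟨C, fun n ↦ ?_⟩
    cases n with
    | zero =>
      rw [(Ext.linearEquiv₀ (R := R) (X := X) (Y := L)).length_eq, ← hC]
      simp [iteratedSum]
    | succ n =>
      have := Ext.subsingleton_of_projective X L n
      simp [Module.length_eq_zero]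
  | succ j ih =>
    obtain ⟨S, T, hS, hT, rfl, h₁, h₂, _, _, hred⟩ := hX
    obtain ⟨C, hC⟩ := ih hred
    have hY (n : ℕ) : Module.length R (Ext S.X₁ L (n + 1)) ≤ Module.length R (Ext S.X₃ L n) := by
      rw [← h₁, h₂]
      exact Module.length_le_of_surjective _ (extConnecting_surjective hT L n)
    have hstep (n : ℕ) : Module.length R (Ext S.X₁ L (n + 2)) ≤
        Module.length R (Ext S.X₁ L n) + Module.length R (Ext S.X₂ L (n + 1)) :=
      (hY (n + 1)).trans (Module.length_le_add_of_exact (extConnecting_extPrecomp_exact hS L n))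
    have hepi {A B : ModuleCat.{u} R} (g : A ⟶ B) [Epi g] :
        Module.length R (Ext B L 0) ≤ Module.length R (Ext A L 0) :=
      Module.length_le_of_injective (extPrecomp g L 0) (Ext.precomp_mk₀_injective_of_epi L g)
    have := hS.epi_g
    have := hT.epi_g
    obtain ⟨D, hD⟩ := ENat.ne_top_iff_exists.1 (hL T.X₂ inferInstance)
    have h0 : Module.length R (Ext S.X₁ L 0) ≤ D := by
      rw [hD, ← (Ext.linearEquiv₀ (R := R) (X := T.X₂) (Y := L)).length_eq, ← h₁]
      exact hepi T.g
    have h1 : Module.length R (Ext S.X₁ L 1) ≤ (C * iteratedSum j 0 : ℕ) :=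
      ((hY 0).trans (hepi S.g)).trans (hC 0)
    have bound (n : ℕ) : Module.length R (Ext S.X₁ L n) ≤
        (D + C * iteratedSum (j + 1) n : ℕ) := by
      induction n using Nat.twoStepInduction with
      | zero => exact h0.trans (by exact_mod_cast Nat.le_add_right _ _)
      | one =>
        refine h1.trans ?_
        norm_cast
        rw [iteratedSum, Finset.sum_range_succ', mul_add]
        lia
      | more n ihn _ =>
        refine (hstep n).trans ((add_le_add ihn (hC (n + 1))).trans ?_)
        norm_cast
        rw [iteratedSum, iteratedSum, Finset.sum_range_succ _ (n + 2),
          Finset.sum_range_succ _ (n + 1)]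
        nlinarith
    refine ⟨D + C, fun n ↦ (bound n).trans ?_⟩
    norm_cast
    nlinarith [one_le_iteratedSum_succ j n]

end Reducible

section MinimalCovers

open Abelian IsLocalRing TensorProduct

variable {R : Type u} [CommRing R] [IsLocalRing R]

variable (R) in
/-- The residue field of a local ring, as an object of the category of modules. -/
noncomputable abbrev residueModule : ModuleCat.{u} R := ModuleCat.of R (ResidueField R)

lemma exists_minimal_cover (M : Type*) [AddCommGroup M] [Module R M] [Module.Finite R M] :
    ∃ (n : ℕ) (π : (Fin n → R) →ₗ[R] M), Function.Surjective π ∧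
      LinearMap.ker π ≤ maximalIdeal R • (⊤ : Submodule R (Fin n → R)) := by
  let b := Module.finBasis (ResidueField R) (ResidueField R ⊗[R] M)
  obtain ⟨v, hv⟩ := (TensorProduct.mk_surjective R M (ResidueField R)
    Ideal.Quotient.mk_surjective).comp_left b
  refine ⟨_, Fintype.linearCombination R v, ?_, fun e he ↦ ?_⟩
  · rw [← LinearMap.range_eq_top, Fintype.range_linearCombination]
    exact span_eq_top_of_tmul_eq_basis _ b (congr_fun hv)
  · have hsum : ∑ i, residue R (e i) • b i = 0 := by
      have := congr_arg (TensorProduct.mk R (ResidueField R) M 1) (LinearMap.mem_ker.1 he)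
      rw [Fintype.linearCombination_apply, map_sum, map_zero] at this
      rw [← this]
      refine Finset.sum_congr rfl fun i _ ↦ ?_
      rw [map_smul, ← congr_fun hv i]
      exact algebraMap_smul (ResidueField R) (e i) _
    have hres := Fintype.linearIndependent_iff.1 b.linearIndependent _ hsum
    rw [pi_eq_sum_univ e]
    refine Submodule.sum_mem _ fun i _ ↦ Submodule.smul_mem_smul ?_ Submodule.mem_top
    exact (residue_eq_zero_iff _).1 (hres i)

lemma smul_residueField_eq_zero {r : R} (hr : r ∈ maximalIdeal R) (x : ResidueField R) :
    r • x = 0 := by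
  rw [Algebra.smul_def, ResidueField.algebraMap_eq, (residue_eq_zero_iff r).2 hr, zero_mul]

lemma comp_eq_zero_of_range_le_smul {X Y : Type*} [AddCommGroup X] [AddCommGroup Y] [Module R X]
    [Module R Y] (φ : X →ₗ[R] Y) (hφ : LinearMap.range φ ≤ maximalIdeal R • ⊤)
    (ψ : Y →ₗ[R] ResidueField R) : ψ ∘ₗ φ = 0 := by
  have : maximalIdeal R • (⊤ : Submodule R Y) ≤ LinearMap.ker ψ :=
    Submodule.smul_le.2 fun r hr y _ ↦ by
      rw [LinearMap.mem_ker, map_smul, smul_residueField_eq_zero hr]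
  ext x
  exact this (hφ ⟨x, rfl⟩)

lemma extPrecomp_zero_eq_zero {X Y : ModuleCat.{u} R} (φ : X ⟶ Y)
    (hφ : LinearMap.range φ.hom ≤ maximalIdeal R • ⊤) :
    extPrecomp φ (residueModule R) 0 = 0 := by
  ext x
  obtain ⟨ψ, rfl⟩ := (Ext.mk₀_bijective _ _).2 x
  rw [extPrecomp_apply, Ext.mk₀_comp_mk₀, LinearMap.zero_apply, Ext.mk₀_eq_zero_iff]
  ext1
  exact comp_eq_zero_of_range_le_smul φ.hom hφ ψ.hom

lemma length_hom_residueModule_ne_top (F : ModuleCat.{u} R) (hF : Module.Finite R F) :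
    Module.length R (F ⟶ residueModule R) ≠ ⊤ := by
  obtain ⟨n, π, hπ⟩ := Module.Finite.exists_fin' R F
  have hinj : Function.Injective (LinearMap.lcomp R (ResidueField R) π) := fun a b h ↦
    LinearMap.ext fun x ↦ by
      obtain ⟨y, rfl⟩ := hπ x
      exact LinearMap.congr_fun h y
  have hk : Module.length R (ResidueField R) = 1 := by
    have := isSimpleModule_iff_isCoatom.2 (maximalIdeal.isMaximal R).out
    exact Module.length_eq_one R (R ⧸ maximalIdeal R)
  rw [(ModuleCat.homLinearEquiv (R := R) (S := R) (M := F) (N := residueModule R)).length_eq]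
  refine ne_top_of_le_ne_top ?_ (Module.length_le_of_injective _ hinj)
  rw [← ((Pi.basisFun R (Fin n)).constr R).length_eq, Module.length_pi]
  simp [hk]

lemma subsingleton_of_subsingleton_ext_zero (M : ModuleCat.{u} R) [Module.Finite R M]
    (h : Subsingleton (Ext M (residueModule R) 0)) : Subsingleton M := by
  obtain ⟨n, π, hπ, hker⟩ := exists_minimal_cover (R := R) M
  rcases n with _ | n
  · exact hπ.subsingleton
  · have hS := LinearMap.shortExact_shortComplexKer hπ
    have hF (x : Ext (ModuleCat.of R (Fin (n + 1) → R)) (residueModule R) 0) : x = 0 := by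
      obtain ⟨y, rfl⟩ := (extPrecomp_exact hS _ _ x).1 (by
        rw [extPrecomp_zero_eq_zero _ (by simpa [LinearMap.shortComplexKer] using hker)]; rfl)
      rw [Subsingleton.elim y 0, map_zero]
    let ρ : (Fin (n + 1) → R) →ₗ[R] ResidueField R :=
      Algebra.linearMap R _ ∘ₗ LinearMap.proj 0
    have hρ := hF (Ext.mk₀ (ModuleCat.ofHom ρ))
    rw [Ext.mk₀_eq_zero_iff] at hρ
    have := LinearMap.congr_fun (congr_arg ModuleCat.Hom.hom hρ) (Pi.single 0 1)
    simp [ρ] at this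

lemma hasProjectiveDimensionLT_of_subsingleton_ext [IsNoetherianRing R] (M : ModuleCat.{u} R)
    [Module.Finite R M] (n : ℕ) (h : Subsingleton (Ext M (residueModule R) n)) :
    HasProjectiveDimensionLT M n := by
  induction n generalizing M with
  | zero =>
    have := subsingleton_of_subsingleton_ext_zero M h
    exact (ModuleCat.isZero_of_subsingleton M).hasProjectiveDimensionLT_zero
  | succ n ih =>
    obtain ⟨r, π, hπ, hker⟩ := exists_minimal_cover (R := R) M
    have hS := LinearMap.shortExact_shortComplexKer hπ
    refine hS.hasProjectiveDimensionLT_X₃ n ?_ ?_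
    · refine ih _ ?_
      have hinj : Function.Injective (extConnecting hS (residueModule R) n) := by
        cases n with
        | zero =>
          rw [injective_iff_map_eq_zero]
          intro x hx
          obtain ⟨y, rfl⟩ := (extPrecomp_extConnecting_exact hS _ _ x).1 hx
          rw [extPrecomp_zero_eq_zero _ (by simpa [LinearMap.shortComplexKer] using hker)]
          rfl
        | succ n => exact extConnecting_injective hS _ n
      exact hinj.subsingleton
    · refine hasProjectiveDimensionLT_of_ge _ 1 _ (by lia)

lemma IsReducible.nontrivial_ext_residueModule [IsNoetherianRing R] {j : ℕ} {M : ModuleCat.{u} R}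
    (hM : IsReducible j M) [Module.Finite R M] (hfree : ¬ Module.Free R M) (n : ℕ) :
    Nontrivial (Ext M (residueModule R) n) := by
  by_contra h
  rw [not_nontrivial_iff_subsingleton] at h
  have := hasProjectiveDimensionLT_of_subsingleton_ext M n h
  have h₁ := hM.subsingleton_ext (residueModule R) (Filter.eventually_atTop.2
    ⟨n, fun m hm ↦ HasProjectiveDimensionLT.subsingleton M n m hm _⟩) 0
  have := hasProjectiveDimensionLT_of_subsingleton_ext M 1 h₁
  rw [← projective_iff_hasProjectiveDimensionLT_one, ← IsProjective.iff_projective] at this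
  exact hfree Module.free_of_flat_of_isLocalRing

end MinimalCovers

section TorIndependence

open Abelian TensorProduct

variable {R : Type u} [CommRing R]

/-- The character module, as an object of the category of modules. -/
abbrev characterObj (N : ModuleCat.{u} R) : ModuleCat.{u} R := ModuleCat.of R (CharacterModule N)

/-- Vanishing of all positive `Ext` groups into the character module of `N`; it amounts to the
vanishing of the groups `Tor n N M` for `0 < n`. -/
def TorIndependent (N M : ModuleCat.{u} R) : Prop :=
  ∀ n : ℕ, Subsingleton (Ext M (characterObj N) (n + 1))

lemma TorIndependent.of_projective (N M : ModuleCat.{u} R) [Projective M] : TorIndependent N M :=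
  fun n ↦ Ext.subsingleton_of_projective M _ n

lemma injective_characterObj (N : ModuleCat.{u} R) [Module.Flat R N] :
    Injective (characterObj N) :=
  (Module.injective_iff_injective_object R (CharacterModule N)).1
    (Module.Flat.iff_characterModule_injective.1 inferInstance)

lemma TorIndependent.of_flat_left (N M : ModuleCat.{u} R) [Module.Flat R N] :
    TorIndependent N M := fun n ↦ by
  have := injective_characterObj N
  exact subsingleton_of_forall_eq 0 fun x ↦ Ext.eq_zero_of_injective x

lemma TorIndependent.kernel {S : ShortComplex (ModuleCat.{u} R)} (hS : S.ShortExact)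
    [Projective S.X₂] {N : ModuleCat.{u} R} (h : TorIndependent N S.X₃) :
    TorIndependent N S.X₁ :=
  fun n ↦ (subsingleton_ext_X₁_iff hS _ n).2 (h (n + 1))

lemma TorIndependent.lTensor_injective {S : ShortComplex (ModuleCat.{u} R)} (hS : S.ShortExact)
    {N : ModuleCat.{u} R} (h : TorIndependent N S.X₃) :
    Function.Injective (S.f.hom.lTensor N) := by
  rw [LinearMap.lTensor_inj_iff_rTensor_inj, rTensor_injective_iff_lcomp_surjective]
  intro ψ
  have := h 0
  obtain ⟨x, hx⟩ := (extPrecomp_extConnecting_exact hS (characterObj N) 0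
    (Ext.mk₀ (ModuleCat.ofHom ψ))).1 (Subsingleton.elim _ _)
  obtain ⟨χ, rfl⟩ := (Ext.mk₀_bijective _ _).2 x
  refine ⟨χ.hom, ?_⟩
  rw [extPrecomp_apply, Ext.mk₀_comp_mk₀, (Ext.mk₀_bijective _ _).1.eq_iff] at hx
  exact congr_arg ModuleCat.Hom.hom hx

lemma CharacterModule.dual_exact {A B C : Type*} [AddCommGroup A] [AddCommGroup B]
    [AddCommGroup C] [Module R A] [Module R B] [Module R C] {f : A →ₗ[R] B} {g : B →ₗ[R] C}
    (h : Function.Exact f g) :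
    Function.Exact (CharacterModule.dual g) (CharacterModule.dual f) := by
  intro c
  constructor
  · intro hc
    have hker : LinearMap.ker g.rangeRestrict.toAddMonoidHom.toIntLinearMap ≤
        LinearMap.ker (AddMonoidHom.toIntLinearMap c) := fun b hb ↦ by
      obtain ⟨a, rfl⟩ := (h b).1 (congr_arg Subtype.val hb)
      exact DFunLike.congr_fun hc a
    obtain ⟨e, he⟩ := CharacterModule.dual_surjective_of_injective (LinearMap.range g).subtype
      (Submodule.injective_subtype _)
      (g.rangeRestrict.toAddMonoidHom.liftOfSurjective g.surjective_rangeRestrict ⟨c, hker⟩)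
    refine ⟨e, ?_⟩
    ext b
    exact (DFunLike.congr_fun he (g.rangeRestrict b)).trans
      (g.rangeRestrict.toAddMonoidHom.liftOfRightInverse_comp_apply _
        (Function.rightInverse_surjInv g.surjective_rangeRestrict) _ b)
  · rintro ⟨c, rfl⟩
    rw [← LinearMap.comp_apply, ← CharacterModule.dual_comp, h.linearMap_comp_eq_zero,
      CharacterModule.dual_zero, LinearMap.zero_apply]

/-- The short complex of character modules of a short complex of modules. -/
noncomputable abbrev characterShortComplex (S : ShortComplex (ModuleCat.{u} R)) :
    ShortComplex (ModuleCat.{u} R) :=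
  ShortComplex.mk (X₁ := characterObj S.X₃) (X₂ := characterObj S.X₂) (X₃ := characterObj S.X₁)
    (ModuleCat.ofHom (CharacterModule.dual S.g.hom))
    (ModuleCat.ofHom (CharacterModule.dual S.f.hom)) (by
      rw [← ModuleCat.ofHom_comp, ← CharacterModule.dual_comp, ← ModuleCat.hom_comp, S.zero,
        ModuleCat.hom_zero, CharacterModule.dual_zero, ModuleCat.ofHom_zero])

lemma shortExact_of_exact {S : ShortComplex (ModuleCat.{u} R)} (hf : Function.Injective S.f.hom)
    (h : Function.Exact S.f.hom S.g.hom) (hg : Function.Surjective S.g.hom) : S.ShortExact where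
  exact := (ShortComplex.ShortExact.moduleCat_exact_iff_function_exact S).2 h
  mono_f := (ModuleCat.mono_iff_injective _).2 hf
  epi_g := (ModuleCat.epi_iff_surjective _).2 hg

lemma exact_of_shortExact {S : ShortComplex (ModuleCat.{u} R)} (hS : S.ShortExact) :
    Function.Exact S.f.hom S.g.hom :=
  (ShortComplex.ShortExact.moduleCat_exact_iff_function_exact S).1 hS.exact

lemma characterShortComplex_shortExact {S : ShortComplex (ModuleCat.{u} R)} (hS : S.ShortExact) :
    (characterShortComplex S).ShortExact :=
  shortExact_of_exact
    (CharacterModule.dual_injective_of_surjective _ hS.moduleCat_surjective_g)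
    (CharacterModule.dual_exact (exact_of_shortExact hS))
    (CharacterModule.dual_surjective_of_injective _ hS.moduleCat_injective_f)

lemma TorIndependent.kernel_left {S : ShortComplex (ModuleCat.{u} R)} (hS : S.ShortExact)
    [Module.Flat R S.X₂] {M : ModuleCat.{u} R} (h : TorIndependent S.X₃ M) :
    TorIndependent S.X₁ M := fun n ↦ by
  have := injective_characterObj S.X₂
  have := h (n + 1)
  refine subsingleton_of_forall_eq 0 fun x ↦ ?_
  obtain ⟨y, rfl⟩ := Ext.covariant_sequence_exact₃ M (characterShortComplex_shortExact hS) x rfl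
    (Subsingleton.elim _ _)
  rw [Ext.eq_zero_of_injective y, Ext.zero_comp]

lemma TorIndependent.rTensor_injective {S : ShortComplex (ModuleCat.{u} R)} (hS : S.ShortExact)
    {M : ModuleCat.{u} R} (h : TorIndependent S.X₃ M) :
    Function.Injective (S.f.hom.rTensor M) := by
  rw [← LinearMap.lTensor_inj_iff_rTensor_inj, ← CharacterModule.dual_surjective_iff_injective]
  intro c
  have := h 0
  obtain ⟨x, hx⟩ := Ext.covariant_sequence_exact₃ M (characterShortComplex_shortExact hS)
    (Ext.mk₀ (ModuleCat.ofHom (CharacterModule.curry c))) rfl (Subsingleton.elim _ _)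
  obtain ⟨χ, rfl⟩ := (Ext.mk₀_bijective _ _).2 x
  rw [Ext.mk₀_comp_mk₀, (Ext.mk₀_bijective _ _).1.eq_iff] at hx
  refine ⟨CharacterModule.uncurry χ.hom, ?_⟩
  rw [← CharacterModule.homEquiv.symm.injective.eq_iff]
  exact congr_arg ModuleCat.Hom.hom hx

end TorIndependence

section BettiGrowth

open Abelian IsLocalRing TensorProduct

variable {R : Type u} [CommRing R]

lemma extPrecomp_comp {X Y Z : ModuleCat.{u} R} (f : X ⟶ Y) (g : Y ⟶ Z) (L : ModuleCat.{u} R)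
    (n : ℕ) (x : Ext Z L n) : extPrecomp (f ≫ g) L n x = extPrecomp f L n (extPrecomp g L n x) := by
  rw [extPrecomp_apply, extPrecomp_apply, extPrecomp_apply, ← Ext.mk₀_comp_mk₀,
    Ext.comp_assoc_of_second_deg_zero]

lemma extPrecomp_extConnecting {S T : ShortComplex (ModuleCat.{u} R)} (hS : S.ShortExact)
    (hT : T.ShortExact) (φ : S ⟶ T) (L : ModuleCat.{u} R) (n : ℕ) (x : Ext T.X₁ L n) :
    extPrecomp φ.τ₃ L (n + 1) (extConnecting hT L n x) =
      extConnecting hS L n (extPrecomp φ.τ₁ L n x) := by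
  simp only [extPrecomp_apply, extConnecting_apply]
  rw [← Ext.comp_assoc (Ext.mk₀ φ.τ₃) hT.extClass x (zero_add 1) (add_comm 1 n) (by lia),
    ← ShortComplex.ShortExact.extClass_naturality hS hT φ,
    Ext.comp_assoc hS.extClass (Ext.mk₀ φ.τ₁) x (add_zero 1) (zero_add n) (by lia)]

/-- Tensoring a short complex on the right with `X`. -/
noncomputable abbrev rTensorShortComplex (S : ShortComplex (ModuleCat.{u} R)) (X : ModuleCat.{u} R) :
    ShortComplex (ModuleCat.{u} R) :=
  ShortComplex.mk (X₁ := ModuleCat.of R (S.X₁ ⊗[R] X)) (X₂ := ModuleCat.of R (S.X₂ ⊗[R] X))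
    (X₃ := ModuleCat.of R (S.X₃ ⊗[R] X))
    (ModuleCat.ofHom (S.f.hom.rTensor X)) (ModuleCat.ofHom (S.g.hom.rTensor X)) (by
      rw [← ModuleCat.ofHom_comp, ← LinearMap.rTensor_comp, ← ModuleCat.hom_comp, S.zero,
        ModuleCat.hom_zero, LinearMap.rTensor_zero, ModuleCat.ofHom_zero])

lemma rTensorShortComplex_shortExact {S : ShortComplex (ModuleCat.{u} R)} (hS : S.ShortExact)
    {X : ModuleCat.{u} R} (h : TorIndependent S.X₃ X) : (rTensorShortComplex S X).ShortExact :=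
  shortExact_of_exact (h.rTensor_injective hS)
    (rTensor_exact X (exact_of_shortExact hS) hS.moduleCat_surjective_g)
    (LinearMap.rTensor_surjective X hS.moduleCat_surjective_g)

/-- Tensoring a short complex on the left with `N`. -/
noncomputable abbrev lTensorShortComplex (N : ModuleCat.{u} R) (S : ShortComplex (ModuleCat.{u} R)) :
    ShortComplex (ModuleCat.{u} R) :=
  ShortComplex.mk (X₁ := ModuleCat.of R (N ⊗[R] S.X₁)) (X₂ := ModuleCat.of R (N ⊗[R] S.X₂))
    (X₃ := ModuleCat.of R (N ⊗[R] S.X₃))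
    (ModuleCat.ofHom (S.f.hom.lTensor N)) (ModuleCat.ofHom (S.g.hom.lTensor N)) (by
      rw [← ModuleCat.ofHom_comp, ← LinearMap.lTensor_comp, ← ModuleCat.hom_comp, S.zero,
        ModuleCat.hom_zero, LinearMap.lTensor_zero, ModuleCat.ofHom_zero])

lemma lTensorShortComplex_shortExact {S : ShortComplex (ModuleCat.{u} R)} (hS : S.ShortExact)
    {N : ModuleCat.{u} R} (h : TorIndependent N S.X₃) : (lTensorShortComplex N S).ShortExact :=
  shortExact_of_exact (h.lTensor_injective hS)
    (lTensor_exact N (exact_of_shortExact hS) hS.moduleCat_surjective_g)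
    (LinearMap.lTensor_surjective N hS.moduleCat_surjective_g)

lemma range_lTensor_le_smul (N : Type*) {X F : Type*} [AddCommGroup N] [AddCommGroup X]
    [AddCommGroup F] [Module R N] [Module R X] [Module R F] {I : Ideal R} (φ : X →ₗ[R] F)
    (hφ : LinearMap.range φ ≤ I • ⊤) : LinearMap.range (φ.lTensor N) ≤ I • ⊤ := by
  rintro _ ⟨z, rfl⟩
  induction z with
  | zero => simp
  | add x y hx hy => rw [map_add]; exact add_mem hx hy
  | tmul n x =>
    rw [LinearMap.lTensor_tmul]
    refine Submodule.smul_induction_on (p := fun y ↦ n ⊗ₜ[R] y ∈ I • (⊤ : Submodule R (N ⊗[R] F)))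
      (hφ ⟨x, rfl⟩) (fun r hr y _ ↦ ?_) (fun y z hy hz ↦ ?_)
    · rw [TensorProduct.tmul_smul]
      exact Submodule.smul_mem_smul hr Submodule.mem_top
    · rw [TensorProduct.tmul_add]
      exact add_mem hy hz

variable [IsLocalRing R]

lemma extPrecomp_lTensor_eq_zero (n : ℕ) (N X F : ModuleCat.{u} R) [Module.Projective R F]
    (φ : X ⟶ F) (hφ : LinearMap.range φ.hom ≤ maximalIdeal R • ⊤) (h : TorIndependent N X) :
    extPrecomp (ModuleCat.ofHom (φ.hom.lTensor N)) (residueModule R) n = 0 := by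
  induction n generalizing N with
  | zero => exact extPrecomp_zero_eq_zero _ (range_lTensor_le_smul N φ.hom hφ)
  | succ n ih =>
    have hS : (Finsupp.linearCombination R (id : N → N)).shortComplexKer.ShortExact :=
      LinearMap.shortExact_shortComplexKer (Finsupp.linearCombination_id_surjective R N)
    set S := (Finsupp.linearCombination R (id : N → N)).shortComplexKer
    have : Module.Free R S.X₂ := inferInstanceAs (Module.Free R (N →₀ R))
    have h' : TorIndependent S.X₃ X := h
    have hX := rTensorShortComplex_shortExact hS h'
    have hF := rTensorShortComplex_shortExact hS (TorIndependent.of_projective S.X₃ F)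
    let Φ : rTensorShortComplex S X ⟶ rTensorShortComplex S F :=
      { τ₁ := ModuleCat.ofHom (φ.hom.lTensor S.X₁)
        τ₂ := ModuleCat.ofHom (φ.hom.lTensor S.X₂)
        τ₃ := ModuleCat.ofHom (φ.hom.lTensor S.X₃)
        comm₁₂ := by
          ext1
          simp [LinearMap.lTensor_comp_rTensor, LinearMap.rTensor_comp_lTensor]
        comm₂₃ := by
          ext1
          simp [LinearMap.lTensor_comp_rTensor, LinearMap.rTensor_comp_lTensor] }
    ext x
    obtain ⟨y, rfl⟩ := extConnecting_surjective hF (residueModule R) n x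
    refine (extPrecomp_extConnecting hX hF Φ _ n y).trans ?_
    have := ih S.X₁ (h'.kernel_left hS)
    simp only [Φ, this]
    simp

lemma sum_length_ext_le_length_ext_tensor [IsNoetherianRing R] (N M : ModuleCat.{u} R)
    [Module.Finite R M] (hM : ∀ n, Nontrivial (Ext M (residueModule R) n))
    (h : TorIndependent N M) (n : ℕ) :
    ∑ i ∈ Finset.range (n + 1), Module.length R (Ext N (residueModule R) i) ≤
      Module.length R (Ext (ModuleCat.of R (N ⊗[R] M)) (residueModule R) n) := by
  have key (M : ModuleCat.{u} R) [Module.Finite R M]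
      (hM : ∀ n, Nontrivial (Ext M (residueModule R) n)) (h : TorIndependent N M) :
      Module.length R (Ext N (residueModule R) 0) ≤
        Module.length R (Ext (ModuleCat.of R (N ⊗[R] M)) (residueModule R) 0) ∧
      ∃ K : ModuleCat.{u} R, Module.Finite R K ∧ (∀ n, Nontrivial (Ext K (residueModule R) n)) ∧
        TorIndependent N K ∧ ∀ n, Module.length R (Ext N (residueModule R) (n + 1)) +
          Module.length R (Ext (ModuleCat.of R (N ⊗[R] K)) (residueModule R) n) ≤
        Module.length R (Ext (ModuleCat.of R (N ⊗[R] M)) (residueModule R) (n + 1)) := by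
    obtain ⟨r, π, hπ, hker⟩ := exists_minimal_cover (R := R) M
    rcases r with _ | r
    · have := hπ.subsingleton
      have h0 := hM 0
      have : Projective M := (ModuleCat.isZero_of_subsingleton M).projective
      have hs : Subsingleton (Ext M (residueModule R) 0) :=
        (Ext.homEquiv₀ (X := M) (Y := residueModule R)).subsingleton_congr.2
          ⟨fun a b ↦ (ModuleCat.isZero_of_subsingleton M).eq_of_src a b⟩
      exact absurd hs (not_subsingleton_iff_nontrivial.2 h0)
    have hS := LinearMap.shortExact_shortComplexKer hπ
    set S := π.shortComplexKer
    have h' : TorIndependent N S.X₃ := h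
    have : Module.Projective R S.X₂ := inferInstanceAs (Module.Projective R (Fin (r + 1) → R))
    have hT := lTensorShortComplex_shortExact hS h'
    have hK := h'.kernel hS
    have hz (n : ℕ) : extPrecomp (lTensorShortComplex N S).f (residueModule R) n = 0 :=
      extPrecomp_lTensor_eq_zero n N S.X₁ S.X₂ S.f
        (by simpa [S, LinearMap.shortComplexKer] using hker) hK
    have hsurj (n : ℕ) :
        Function.Surjective (extPrecomp (lTensorShortComplex N S).g (residueModule R) n) :=
      fun x ↦ (extPrecomp_exact hT _ n x).1 (by rw [hz]; rfl)
    have hinj (n : ℕ) : Function.Injective (extConnecting hT (residueModule R) n) := by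
      rw [injective_iff_map_eq_zero]
      intro x hx
      obtain ⟨y, rfl⟩ := (extPrecomp_extConnecting_exact hT _ _ x).1 hx
      rw [hz]
      rfl
    have hret (n : ℕ) : Module.length R (Ext N (residueModule R) n) ≤
        Module.length R (Ext (ModuleCat.of R (N ⊗[R] S.X₂)) (residueModule R) n) := by
      let i : N ⟶ ModuleCat.of R (N ⊗[R] S.X₂) := ModuleCat.ofHom
        ((TensorProduct.mk R N (Fin (r + 1) → R)).flip (Pi.single 0 1))
      let p : ModuleCat.of R (N ⊗[R] S.X₂) ⟶ N := ModuleCat.ofHom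
        ((TensorProduct.rid R N).toLinearMap ∘ₗ
          (LinearMap.proj (R := R) (φ := fun _ : Fin (r + 1) ↦ R) 0).lTensor N)
      have hip : i ≫ p = 𝟙 N := by
        ext x
        simp [i, p]
      refine Module.length_le_of_injective (extPrecomp p _ n) (Function.LeftInverse.injective
        (g := extPrecomp i _ n) fun x ↦ ?_)
      rw [← extPrecomp_comp, hip, extPrecomp_apply, Ext.mk₀_id_comp]
    refine ⟨(hret 0).trans (Module.length_le_of_surjective _ (hsurj 0)), S.X₁, ?_, fun n ↦ ?_, hK,
      fun n ↦ ?_⟩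
    · exact inferInstanceAs (Module.Finite R (LinearMap.ker π))
    · have := hM (n + 1)
      exact (extConnecting_surjective hS (residueModule R) n).nontrivial
    · rw [add_comm]
      exact (add_le_add_right (hret (n + 1)) _).trans (Module.length_eq_add_of_exact _ _ (hinj n)
        (hsurj (n + 1)) (extConnecting_extPrecomp_exact hT _ n)).ge
  induction n generalizing M with
  | zero => simpa using (key M hM h).1
  | succ n ih =>
    obtain ⟨-, K, _, hKn, hK, hle⟩ := key M hM h
    rw [Finset.sum_range_succ, add_comm]
    exact (add_le_add_right (ih K hKn hK) _).trans (hle n)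

end BettiGrowth

section TorExt

open Abelian TensorProduct

variable {R : Type u} [CommRing R]

lemma exists_comp_eq_of_exact_lTensor {N A B C : Type*} [AddCommGroup N] [AddCommGroup A]
    [AddCommGroup B] [AddCommGroup C] [Module R N] [Module R A] [Module R B] [Module R C]
    {f : A →ₗ[R] B} {g : B →ₗ[R] C} (h : Function.Exact (f.lTensor N) (g.lTensor N))
    (φ : B →ₗ[R] CharacterModule N) (hφ : φ ∘ₗ f = 0) :
    ∃ ψ : C →ₗ[R] CharacterModule N, ψ ∘ₗ g = φ := by
  have h' : Function.Exact (f.rTensor N) (g.rTensor N) :=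
    (Function.Exact.iff_of_ladder_linearEquiv (e₁ := TensorProduct.comm R N A)
      (e₂ := TensorProduct.comm R N B) (e₃ := TensorProduct.comm R N C)
      (by ext; simp) (by ext; simp)).2 h
  obtain ⟨e, he⟩ := (CharacterModule.dual_exact h' (CharacterModule.homEquiv φ)).1 (by
    rw [← CharacterModule.homEquiv.symm.map_eq_zero_iff]
    exact hφ)
  refine ⟨CharacterModule.homEquiv.symm e, ?_⟩
  rw [← CharacterModule.homEquiv.symm_apply_apply φ, ← he]
  rfl

lemma subsingleton_ext_of_isZero_tor (N M : ModuleCat.{u} R) (n : ℕ)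
    (h : IsZero (((Tor (ModuleCat.{u} R) (n + 1)).obj N).obj M)) :
    Subsingleton (Ext M (characterObj N) (n + 1)) := by
  let P := ProjectiveResolution.of M
  have hex : Function.Exact ((P.complex.d (n + 2) (n + 1)).hom.lTensor N)
      ((P.complex.d (n + 1) n).hom.lTensor N) := by
    have h₁ := h.of_iso
      (P.isoLeftDerivedObj ((MonoidalCategory.tensoringLeft _).obj N) (n + 1)).symm
    have h₂ := (HomologicalComplex.exactAt_iff_isZero_homology _ _).2 h₁
    rw [HomologicalComplex.exactAt_iff' _ (n + 2) (n + 1) n (by simp) (by simp)] at h₂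
    exact (ShortComplex.ShortExact.moduleCat_exact_iff_function_exact _).1 h₂
  refine subsingleton_of_forall_eq 0 fun x ↦ ?_
  obtain ⟨φ, hφ, rfl⟩ := P.extMk_surjective x (n + 2) rfl
  rw [P.extMk_eq_zero_iff φ (n + 2) rfl hφ n rfl]
  obtain ⟨ψ, hψ⟩ := exists_comp_eq_of_exact_lTensor hex φ.hom (congr_arg ModuleCat.Hom.hom hφ)
  exact ⟨ModuleCat.ofHom ψ, ModuleCat.hom_ext hψ⟩

end TorExt

section RegularLocal

open IsLocalRing RingTheory.Sequence

lemma maximalIdeal_quotient_eq_map {A : Type*} [CommRing A] [IsLocalRing A]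
    {I : Ideal A} [IsLocalRing (A ⧸ I)] :
    maximalIdeal (A ⧸ I) = (maximalIdeal A).map (Ideal.Quotient.mk I) :=
  (map_maximalIdeal_of_surjective _ Ideal.Quotient.mk_surjective).symm

lemma head_eq_bot_and_isWeaklyRegular_of_ltSeries {A : Type u} [CommRing A] [IsLocalRing A]
    [IsNoetherianRing A] (l : List A) (hl : maximalIdeal A = Ideal.ofList l)
    (s : LTSeries (PrimeSpectrum A)) (hs : l.length ≤ s.length) :
    s.head.asIdeal = ⊥ ∧ IsWeaklyRegular A l := by
  induction hn : l.length generalizing A with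
  | zero =>
    obtain rfl := List.length_eq_zero_iff.1 hn
    refine ⟨le_bot_iff.1 ?_, IsWeaklyRegular.nil _ _⟩
    rw [← Ideal.ofList_nil, ← hl]
    exact le_maximalIdeal_of_isPrime _
  | succ n ih =>
    obtain ⟨x, t, rfl⟩ := List.exists_cons_of_length_eq_add_one hn
    have hx : x ∈ maximalIdeal A := hl ▸ Ideal.subset_span (by simp)
    have : Nontrivial (A ⧸ Ideal.span {x}) := Ideal.Quotient.nontrivial_iff.2 fun h ↦
      (maximalIdeal.isMaximal A).ne_top (top_le_iff.1 (h ▸ (by simpa using hx)))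
    have : IsLocalRing (A ⧸ Ideal.span {x}) :=
      .of_surjective' _ Ideal.Quotient.mk_surjective
    have hquot : maximalIdeal (A ⧸ Ideal.span {x}) =
        Ideal.ofList (t.map (Ideal.Quotient.mk (Ideal.span {x}))) := by
      rw [maximalIdeal_quotient_eq_map, hl, Ideal.map_ofList]
      simp [Ideal.ofList_cons]
    have key (q : LTSeries (PrimeSpectrum A)) (hq : x ∈ q.head.asIdeal) (hlen : n ≤ q.length) :
        q.head.asIdeal = Ideal.span {x} ∧ IsWeaklyRegular (A ⧸ Ideal.span {x}) t := by
      have hmem (i) : q i ∈ PrimeSpectrum.zeroLocus (Ideal.span {x} : Set A) := by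
        rw [PrimeSpectrum.zeroLocus_span, PrimeSpectrum.mem_zeroLocus, Set.singleton_subset_iff]
        exact q.head_le i hq
      let q' : LTSeries (PrimeSpectrum (A ⧸ Ideal.span {x})) :=
        { length := q.length
          toFun := fun i ↦ (Ideal.primeSpectrumQuotientOrderIsoZeroLocus _).symm ⟨q i, hmem i⟩
          step := fun i ↦ (Ideal.primeSpectrumQuotientOrderIsoZeroLocus
            (Ideal.span {x})).symm.strictMono (show (⟨q i.castSucc, hmem _⟩ :
              PrimeSpectrum.zeroLocus (Ideal.span {x} : Set A)) < ⟨q i.succ, hmem _⟩ from q.step i) }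
      obtain ⟨h₁, h₂⟩ := ih (t.map (Ideal.Quotient.mk (Ideal.span {x}))) hquot q'
        (by simpa [q'] using (by simpa using hn : t.length = n).trans_le hlen)
        (by simpa using hn)
      refine ⟨?_, (isWeaklyRegular_map_algebraMap_iff (A ⧸ Ideal.span {x}) _ t).1 h₂⟩
      have h₃ : (Ideal.primeSpectrumQuotientOrderIsoZeroLocus _ q'.head).1 = q.head :=
        congr_arg Subtype.val ((Ideal.primeSpectrumQuotientOrderIsoZeroLocus _).apply_symm_apply
          ⟨q.head, hmem 0⟩)
      rw [← h₃]
      change q'.head.asIdeal.comap (Ideal.Quotient.mk _) = _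
      rw [h₁, ← RingHom.ker_eq_comap_bot, Ideal.mk_ker]
    have hne : x ∉ s.head.asIdeal := fun hmem ↦ by
      have hpos : s.length ≠ 0 := by lia
      have h0 := (key s hmem (by lia)).1
      have hlt : s.head < (s.tail hpos).head := by
        rw [RelSeries.head_tail]
        have : NeZero s.length := ⟨hpos⟩
        exact s.strictMono Fin.one_pos'
      have h1 := (key (s.tail hpos) (hlt.le hmem) (by rw [RelSeries.tail_length]; lia)).1
      exact hlt.ne (PrimeSpectrum.ext (h0.trans h1.symm))
    obtain ⟨p, hp₀, hp₁, hp₂⟩ : ∃ p : LTSeries (PrimeSpectrum A), x ∈ p.last.asIdeal ∧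
        s.length ≤ p.length ∧ p.head = s.head := by
      by_cases h : x ∈ s.last.asIdeal
      · exact ⟨s, h, le_rfl, rfl⟩
      · have hlt : s.last < closedPoint A := lt_of_le_of_ne
          (le_maximalIdeal_of_isPrime _) fun e ↦ h (e ▸ hx)
        exact ⟨s.snoc _ hlt, by rw [RelSeries.last_snoc]; exact hx, by simp, by simp⟩
    obtain ⟨q, hq₀, hq₁, hq₂, -⟩ := PrimeSpectrum.exist_ltSeries_mem_one_of_mem_last p hp₀
    have hpos : q.length ≠ 0 := by lia
    obtain ⟨hspan, hreg⟩ := key (q.tail hpos) (by rwa [RelSeries.head_tail])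
      (by rw [RelSeries.tail_length]; lia)
    have hle : s.head.asIdeal ≤ Ideal.span {x} := by
      rw [← hspan, ← hp₂, hq₂, RelSeries.head_tail]
      exact q.head_le 1
    have hbot : s.head.asIdeal = ⊥ := by
      refine Submodule.eq_bot_of_le_smul_of_le_jacobson_bot (maximalIdeal A) _
        (IsNoetherian.noetherian _) (fun a ha ↦ ?_) (maximalIdeal_le_jacobson _)
      obtain ⟨b, rfl⟩ := Ideal.mem_span_singleton.1 (hle ha)
      have hb := (s.head.isPrime.mem_or_mem ha).resolve_left hne
      exact Submodule.smul_mem_smul hx hb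
    refine ⟨hbot, (isWeaklyRegular_cons_iff _ _ _).2 ⟨?_, ?_⟩⟩
    · refine isSMulRegular_iff_right_eq_zero_of_smul.2 fun a ha ↦ ?_
      have h0 : x * a ∈ s.head.asIdeal := by
        rw [hbot]; exact ha
      have := (s.head.isPrime.mem_or_mem h0).resolve_left hne
      rwa [hbot] at this
    · refine (LinearEquiv.isWeaklyRegular_congr (Submodule.quotEquivOfEq _ _ ?_) t).2 hreg
      rw [← Submodule.ideal_span_singleton_smul, smul_eq_mul, Ideal.mul_top]

end RegularLocal

section GlobalDimension

open Abelian IsLocalRing RingTheory.Sequence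

lemma subsingleton_ext_characterObj {A : Type u} [CommRing A] (N : ModuleCat.{u} A) (m : ℕ)
    [HasProjectiveDimensionLT N (m + 1)] (X : ModuleCat.{u} A) :
    Subsingleton (Ext X (characterObj N) (m + 1)) := by
  suffices h : ∀ n, m ≤ n → Subsingleton (Ext X (characterObj N) (n + 1)) from h m le_rfl
  induction m generalizing N with
  | zero =>
    intro n _
    have : Module.Projective A N := (IsProjective.iff_projective N).2
      (projective_iff_hasProjectiveDimensionLT_one.2 ‹_›)
    exact TorIndependent.of_flat_left N X n
  | succ m ih =>
    rintro (_ | n) hn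
    · lia
    obtain ⟨P⟩ := EnoughProjectives.presentation N
    let S := ShortComplex.mk (kernel.ι P.f) P.f (by simp)
    have hS : S.ShortExact :=
      { exact := ShortComplex.exact_kernel P.f
        mono_f := inferInstanceAs (Mono (kernel.ι P.f))
        epi_g := P.epi }
    have : Projective S.X₂ := P.projective
    have : Module.Projective A S.X₂ := (IsProjective.iff_projective _).2 inferInstance
    have : HasProjectiveDimensionLT S.X₃ (m + 2) := ‹_›
    have : HasProjectiveDimensionLT S.X₁ (m + 1) :=
      (hS.hasProjectiveDimensionLT_X₃_iff m inferInstance).1 inferInstance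
    have h := ih S.X₁ n (by lia)
    have := injective_characterObj S.X₂
    refine subsingleton_of_forall_eq 0 fun x ↦ ?_
    obtain ⟨y, hy⟩ := Ext.covariant_sequence_exact₁ X (characterShortComplex_shortExact hS) x
      (Ext.eq_zero_of_injective _) rfl
    rw [← hy, h.elim y 0, Ext.zero_comp]

lemma exists_retract_residueModule (A : Type u) [CommRing A] [IsLocalRing A] :
    ∃ (i : residueModule A ⟶ characterObj (residueModule A))
      (p : characterObj (residueModule A) ⟶ residueModule A), i ≫ p = 𝟙 _ := by
  obtain ⟨c, hc⟩ := CharacterModule.exists_character_apply_ne_zero_of_ne_zero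
    (one_ne_zero (α := ResidueField A))
  have : IsScalarTower A (ResidueField A) (CharacterModule (ResidueField A)) :=
    ⟨fun a b c ↦ by ext x; simp [mul_comm, mul_left_comm, Algebra.smul_def]⟩
  obtain ⟨g, hg⟩ := LinearMap.exists_leftInverse_of_injective
    (LinearMap.toSpanSingleton (ResidueField A) (CharacterModule (ResidueField A)) c)
    (LinearMap.ker_toSpanSingleton _ fun h ↦ hc (by rw [h]; rfl))
  refine ⟨ModuleCat.ofHom ((LinearMap.toSpanSingleton (ResidueField A) _ c).restrictScalars A),
    ModuleCat.ofHom (g.restrictScalars A), ?_⟩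
  ext x
  exact LinearMap.congr_fun hg x

lemma hasProjectiveDimensionLT_of_residueModule {A : Type u} [CommRing A] [IsLocalRing A]
    [IsNoetherianRing A] (m : ℕ) [HasProjectiveDimensionLT (residueModule A) (m + 1)]
    (X : ModuleCat.{u} A) [Module.Finite A X] : HasProjectiveDimensionLT X (m + 1) := by
  refine hasProjectiveDimensionLT_of_subsingleton_ext X (m + 1) ?_
  obtain ⟨i, p, hip⟩ := exists_retract_residueModule A
  have := subsingleton_ext_characterObj (residueModule A) m X
  refine subsingleton_of_forall_eq 0 fun x ↦ ?_
  rw [← Ext.comp_mk₀_id x, ← hip, ← Ext.mk₀_comp_mk₀, ← Ext.comp_assoc x _ _ rfl rfl (by simp),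
    Subsingleton.elim (x.comp (Ext.mk₀ i) (add_zero _)) 0, Ext.zero_comp]

lemma hasProjectiveDimensionLT_residueModule {A : Type u} [CommRing A] [IsLocalRing A]
    [IsNoetherianRing A] (l : List A) (hl : maximalIdeal A = Ideal.ofList l)
    (hreg : IsWeaklyRegular A l) :
    HasProjectiveDimensionLT (residueModule A) (l.length + 1) := by
  have h := ModuleCat.projectiveDimension_quotient_eq_add_length_of_isWeaklyRegular
    (ModuleCat.of A A) l hreg fun r hr ↦ hl ▸ Ideal.subset_span hr
  rw [ModuleCat.projectiveDimension_eq_zero_of_projective (ModuleCat.of A A), zero_add] at h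
  have h' := (projectiveDimension_le_iff _ _).1 h.le
  have e : (A ⧸ (Ideal.ofList l • ⊤ : Ideal A)) ≃ₗ[A] A ⧸ maximalIdeal A :=
    Submodule.quotEquivOfEq _ _ (by rw [← hl, smul_eq_mul, Ideal.mul_top])
  exact ModuleCat.hasProjectiveDimensionLE_of_linearEquiv
    (M := ModuleCat.of A (A ⧸ (Ideal.ofList l • ⊤ : Ideal A))) (N := residueModule A) e l.length

end GlobalDimension

section AuslanderBuchsbaum

open IsLocalRing RingTheory.Sequence

lemma IsRegularLocal.exists_hasProjectiveDimensionLT {Q : Type u} [CommRing Q] [IsLocalRing Q]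
    (hQ : IsRegularLocal Q) : ∃ d : ℕ, ringKrullDim Q = d ∧
      ∀ (X : ModuleCat.{u} Q) [Module.Finite Q X], HasProjectiveDimensionLT X (d + 1) := by
  obtain ⟨_, s, hs, hdim⟩ := hQ
  refine ⟨s.card, hdim.symm, fun X _ ↦ ?_⟩
  obtain ⟨p, hp⟩ := Order.le_krullDim_iff.1 hdim.le
  have hl : maximalIdeal Q = Ideal.ofList s.toList := by
    rw [← hs]; congr 1; ext; simp
  have := hasProjectiveDimensionLT_residueModule s.toList hl
    (head_eq_bot_and_isWeaklyRegular_of_ltSeries s.toList hl p (by simp [hp])).2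
  rw [Finset.length_toList] at this
  exact hasProjectiveDimensionLT_of_residueModule s.card X

lemma hasProjectiveDimensionLT_of_moduleDepth_eq {Q : Type u} [CommRing Q] [IsLocalRing Q]
    (hQ : IsRegularLocal Q) {f : List Q} (hf : IsRegular Q f) [IsLocalRing (Q ⧸ Ideal.ofList f)]
    (X : Type u) [AddCommGroup X] [Nontrivial X] [Module Q X] [Module (Q ⧸ Ideal.ofList f) X]
    [IsScalarTower Q (Q ⧸ Ideal.ofList f) X] [Module.Finite (Q ⧸ Ideal.ofList f) X]
    (hX : (moduleDepth (Q ⧸ Ideal.ofList f) X : WithBot ℕ∞) =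
      ringKrullDim (Q ⧸ Ideal.ofList f)) :
    HasProjectiveDimensionLT (ModuleCat.of Q X) (f.length + 1) := by
  obtain ⟨d, hd, hpd⟩ := hQ.exists_hasProjectiveDimensionLT
  have := hQ.1
  have : Module.Finite Q X := .trans (Q ⧸ Ideal.ofList f) X
  have hadd := ringKrullDim_add_length_eq_ringKrullDim_of_isRegular f hf
  rw [← hX, hd] at hadd
  have hadd' : moduleDepth (Q ⧸ Ideal.ofList f) X + f.length = d := by exact_mod_cast hadd
  have hlt : moduleDepth (Q ⧸ Ideal.ofList f) X < ⊤ :=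
    lt_top_iff_ne_top.2 fun h ↦ by simp [h] at hadd'
  have : Nonempty {n : ℕ∞ | ∃ rs : List (Q ⧸ Ideal.ofList f), n = (rs.length : ℕ∞) ∧
      (∀ x ∈ rs, x ∈ maximalIdeal (Q ⧸ Ideal.ofList f)) ∧ IsRegular X rs} :=
    ⟨0, [], by simp, by simp, IsRegular.nil _ _⟩
  obtain ⟨rs, hlen, hmem, hrs⟩ := ENat.sSup_mem_of_nonempty_of_lt_top hlt
  change moduleDepth (Q ⧸ Ideal.ofList f) X = _ at hlen
  obtain ⟨rs, rfl⟩ :=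
    List.map_surjective_iff.2 (Ideal.Quotient.mk_surjective (I := Ideal.ofList f)) rs
  have hrs' : IsWeaklyRegular X rs :=
    (isWeaklyRegular_map_algebraMap_iff (Q ⧸ Ideal.ofList f) X rs).1 hrs.1
  have hmem' : ∀ r ∈ rs, r ∈ maximalIdeal Q := fun r hr ↦ by
    have h := hmem _ (List.mem_map_of_mem hr)
    rw [mem_maximalIdeal, mem_nonunits_iff] at h ⊢
    exact fun hu ↦ h (hu.map _)
  have heq := ModuleCat.projectiveDimension_quotient_eq_add_length_of_isWeaklyRegular
    (ModuleCat.of Q X) rs hrs' hmem'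
  have hle := (projectiveDimension_le_iff _ d).2
    (hpd (ModuleCat.of Q (X ⧸ Ideal.ofList rs • (⊤ : Submodule Q X))))
  rw [hlen, List.length_map] at hadd'
  have hadd'' : rs.length + f.length = d := by exact_mod_cast hadd'
  refine (projectiveDimension_le_iff _ f.length).1 ?_
  rw [heq, ← hadd'', add_comm rs.length, Nat.cast_add,
    ENat.WithBot.add_le_add_natCast_right_iff] at hle
  exact hle

end AuslanderBuchsbaum

section BaseChange

open Abelian TensorProduct

variable {A : Type u} [CommRing A] (B : Type u) [CommRing B] [Algebra A B]

/-- The base change of a short complex of modules. -/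
noncomputable abbrev baseChangeShortComplex (S : ShortComplex (ModuleCat.{u} A)) :
    ShortComplex (ModuleCat.{u} B) :=
  ShortComplex.mk (X₁ := ModuleCat.of B (B ⊗[A] S.X₁)) (X₂ := ModuleCat.of B (B ⊗[A] S.X₂))
    (X₃ := ModuleCat.of B (B ⊗[A] S.X₃)) (ModuleCat.ofHom (S.f.hom.baseChange B))
    (ModuleCat.ofHom (S.g.hom.baseChange B)) (by
      rw [← ModuleCat.ofHom_comp, ← LinearMap.baseChange_comp, ← ModuleCat.hom_comp, S.zero,
        ModuleCat.hom_zero, LinearMap.baseChange_zero, ModuleCat.ofHom_zero])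

variable {B}

lemma baseChangeShortComplex_shortExact {S : ShortComplex (ModuleCat.{u} A)} (hS : S.ShortExact)
    (h : TorIndependent (ModuleCat.of A B) S.X₃) : (baseChangeShortComplex B S).ShortExact :=
  shortExact_of_exact (h.lTensor_injective hS)
    (lTensor_exact B (exact_of_shortExact hS) hS.moduleCat_surjective_g)
    (LinearMap.lTensor_surjective B hS.moduleCat_surjective_g)

lemma IsReducible.baseChange {j : ℕ} {X : ModuleCat.{u} A} (hX : IsReducible j X)
    (h : TorIndependent (ModuleCat.of A B) X) :
    IsReducible j (ModuleCat.of B (B ⊗[A] X)) := by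
  induction j generalizing X with
  | zero =>
    obtain ⟨_, _⟩ := hX
    exact ⟨inferInstanceAs (Module.Finite B (B ⊗[A] X)),
      inferInstanceAs (Module.Projective B (B ⊗[A] X))⟩
  | succ j ih =>
    obtain ⟨S, T, hS, hT, rfl, hTX, hST, _, hproj, hred⟩ := hX
    have hproj' : Projective T.X₂ := (IsProjective.iff_projective T.X₂).1 inferInstance
    have hZ : TorIndependent (ModuleCat.of A B) T.X₁ := TorIndependent.kernel hT (hTX ▸ h)
    refine ⟨baseChangeShortComplex B S, baseChangeShortComplex B T,
      baseChangeShortComplex_shortExact hS (hST ▸ hZ),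
      baseChangeShortComplex_shortExact hT (hTX ▸ h), rfl,
      congr_arg (fun Y : ModuleCat.{u} A ↦ ModuleCat.of B (B ⊗[A] Y)) hTX,
      congr_arg (fun Y : ModuleCat.{u} A ↦ ModuleCat.of B (B ⊗[A] Y)) hST,
      inferInstanceAs (Module.Finite B (B ⊗[A] T.X₂)),
      inferInstanceAs (Module.Projective B (B ⊗[A] T.X₂)), ih hred fun n ↦ ?_⟩
    exact subsingleton_ext_of_subsingleton hS _ _ (h n) (hST ▸ hZ n)

lemma hasProjectiveDimensionLT_of_ker_eq_span_singleton {a : A} (ha : IsSMulRegular A a)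
    (hsurj : Function.Surjective (algebraMap A B))
    (hker : RingHom.ker (algebraMap A B) = Ideal.span {a}) :
    HasProjectiveDimensionLT (ModuleCat.of A B) 2 := by
  let S : ShortComplex (ModuleCat.{u} A) :=
    ShortComplex.mk (ModuleCat.ofHom (LinearMap.lsmul A A a))
      (ModuleCat.ofHom (Algebra.linearMap A B)) (by
        ext
        have h : a ∈ RingHom.ker (algebraMap A B) := hker ▸ Ideal.mem_span_singleton_self a
        simpa using h)
  have hS : S.ShortExact := shortExact_of_exact ha (fun b ↦ by
    change b ∈ RingHom.ker (algebraMap A B) ↔ _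
    rw [hker, Ideal.mem_span_singleton']
    simp [S, mul_comm]) hsurj
  have h₁ : Projective S.X₁ := (IsProjective.iff_projective (ModuleCat.of A A)).1 inferInstance
  have h₂ : Projective S.X₂ := (IsProjective.iff_projective (ModuleCat.of A A)).1 inferInstance
  exact hS.hasProjectiveDimensionLT_X₃ 1 inferInstance inferInstance

lemma TorIndependent.of_hasProjectiveDimensionLT_two (N : ModuleCat.{u} A)
    [HasProjectiveDimensionLT N 2] {S : ShortComplex (ModuleCat.{u} A)} (hS : S.ShortExact)
    [Projective S.X₂] : TorIndependent N S.X₁ := fun n ↦ by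
  rw [subsingleton_ext_X₁_iff hS]
  have := hasProjectiveDimensionLT_of_ge N 2 (n + 1 + 1) (by lia)
  exact subsingleton_ext_characterObj N (n + 1) S.X₃

end BaseChange

section Eisenbud

open Abelian TensorProduct

variable {A : Type u} [CommRing A] {B : Type u} [CommRing B] [Algebra A B] {a : A}

lemma exists_one_tmul_eq (hsurj : Function.Surjective (algebraMap A B)) {N : Type*}
    [AddCommGroup N] [Module A N] (z : B ⊗[A] N) : ∃ x : N, (1 : B) ⊗ₜ[A] x = z :=
  TensorProduct.mk_surjective A N B hsurj z

lemma one_tmul_eq_zero_iff (hsurj : Function.Surjective (algebraMap A B))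
    (hker : RingHom.ker (algebraMap A B) = Ideal.span {a}) {N : Type*} [AddCommGroup N]
    [Module A N] (x : N) : (1 : B) ⊗ₜ[A] x = 0 ↔ ∃ y : N, a • y = x := by
  have hexact : Function.Exact (LinearMap.lsmul A A a) (Algebra.linearMap A B) := fun b ↦ by
    change b ∈ RingHom.ker (algebraMap A B) ↔ _
    rw [hker, Ideal.mem_span_singleton']
    simp [mul_comm]
  have h := rTensor_exact N hexact hsurj (1 ⊗ₜ x)
  rw [LinearMap.rTensor_tmul, Algebra.linearMap_apply, map_one] at h
  rw [h]
  constructor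
  · rintro ⟨z, hz⟩
    refine ⟨TensorProduct.lid A N z, ?_⟩
    have hsmul : TensorProduct.lid A N ((LinearMap.lsmul A A a).rTensor N z) =
        a • TensorProduct.lid A N z := by
      clear hz
      induction z with
      | zero => simp
      | tmul b n => simp [mul_smul]
      | add u v hu hv => simp [hu, hv]
    rw [← hsmul, hz, TensorProduct.lid_tmul, one_smul]
  · rintro ⟨y, rfl⟩
    exact ⟨1 ⊗ₜ y, by simp [TensorProduct.smul_tmul']⟩

variable {X F : Type u} [AddCommGroup X] [Module A X] [Module B X] [IsScalarTower A B X]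
  [AddCommGroup F] [Module A F]

lemma IsReducible.succ_of_ker (ha : IsSMulRegular F a)
    (hsurj : Function.Surjective (algebraMap A B))
    (hker : RingHom.ker (algebraMap A B) = Ideal.span {a})
    (π : F →ₗ[A] X) (hπ : Function.Surjective π) [Module.Finite A F] [Module.Projective A F]
    {j : ℕ} (hred : IsReducible j (ModuleCat.of B (B ⊗[A] LinearMap.ker π))) :
    IsReducible (j + 1) (ModuleCat.of B X) := by
  have haX (x : X) : a • x = 0 := by
    have : algebraMap A B a = 0 := by
      rw [← RingHom.mem_ker, hker]; exact Ideal.mem_span_singleton_self a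
    rw [← algebraMap_smul B, this, zero_smul]
  have hmem (e : F) : a • e ∈ LinearMap.ker π := by
    rw [LinearMap.mem_ker, map_smul, haX]
  let δ : F →ₗ[A] B ⊗[A] LinearMap.ker π :=
    TensorProduct.mk A B _ 1 ∘ₗ (LinearMap.lsmul A F a).codRestrict (LinearMap.ker π) hmem
  have hδ_apply (e : F) : δ e = 1 ⊗ₜ ⟨a • e, hmem e⟩ := rfl
  have hδ (e : F) : δ e = 0 ↔ π e = 0 := by
    rw [hδ_apply, one_tmul_eq_zero_iff hsurj hker]
    constructor
    · rintro ⟨y, hy⟩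
      rw [← ha (congr_arg Subtype.val hy)]
      exact y.2
    · exact fun h ↦ ⟨⟨e, h⟩, rfl⟩
  obtain ⟨g, hg⟩ : ∃ g : X →ₗ[A] B ⊗[A] LinearMap.ker π, ∀ e, g (π e) = δ e := by
    refine ⟨(LinearMap.ker π).liftQ δ (fun e he ↦ (hδ e).2 he) ∘ₗ
      (π.quotKerEquivOfSurjective hπ).symm, fun e ↦ ?_⟩
    have : (π.quotKerEquivOfSurjective hπ).symm (π e) = Submodule.Quotient.mk e := by
      rw [LinearEquiv.symm_apply_eq]; rfl
    rw [LinearMap.comp_apply, LinearEquiv.coe_coe, this]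
    exact Submodule.liftQ_apply _ _ _
  let φ := (LinearMap.ker π).subtype.baseChange B
  let ρ : B ⊗[A] F →ₗ[B] X := LinearMap.liftBaseChange B π
  let S : ShortComplex (ModuleCat.{u} B) :=
    ShortComplex.mk (X₁ := ModuleCat.of B X) (X₃ := ModuleCat.of B (LinearMap.range φ))
      (ModuleCat.ofHom (LinearMap.extendScalarsOfSurjective hsurj g))
      (ModuleCat.ofHom φ.rangeRestrict) (by
        ext x
        obtain ⟨e, rfl⟩ := hπ x
        change φ (g (π e)) = 0
        rw [hg, hδ_apply, LinearMap.baseChange_tmul, one_tmul_eq_zero_iff hsurj hker]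
        exact ⟨e, rfl⟩)
  let T : ShortComplex (ModuleCat.{u} B) :=
    ShortComplex.mk (X₁ := ModuleCat.of B (LinearMap.range φ)) (X₃ := ModuleCat.of B X)
      (ModuleCat.ofHom (LinearMap.range φ).subtype) (ModuleCat.ofHom ρ) (by
        ext ⟨_, z, rfl⟩
        obtain ⟨k, rfl⟩ := exists_one_tmul_eq hsurj z
        change ρ (φ (1 ⊗ₜ k)) = 0
        simp [ρ, φ])
  refine ⟨S, T, ?_, ?_, rfl, rfl, rfl, inferInstanceAs (Module.Finite B (B ⊗[A] F)),
    inferInstanceAs (Module.Projective B (B ⊗[A] F)), hred⟩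
  · refine shortExact_of_exact ?_ ?_ φ.surjective_rangeRestrict
    · refine (injective_iff_map_eq_zero _).2 fun x hx ↦ ?_
      obtain ⟨e, rfl⟩ := hπ x
      exact (hδ e).1 ((hg e).symm.trans hx)
    · intro z
      constructor
      · intro hz
        obtain ⟨⟨k, hk⟩, rfl⟩ := exists_one_tmul_eq hsurj z
        have hz' : φ (1 ⊗ₜ ⟨k, hk⟩) = 0 := congr_arg Subtype.val hz
        rw [LinearMap.baseChange_tmul, one_tmul_eq_zero_iff hsurj hker] at hz'
        obtain ⟨e, rfl⟩ := hz'
        exact ⟨π e, hg e⟩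
      · rintro ⟨x, rfl⟩
        exact LinearMap.congr_fun (congr_arg ModuleCat.Hom.hom S.zero) x
  · refine shortExact_of_exact Subtype.val_injective ?_ ?_
    · intro z
      constructor
      · intro hz
        obtain ⟨e, rfl⟩ := exists_one_tmul_eq hsurj z
        have hz' : ρ (1 ⊗ₜ e) = 0 := hz
        rw [LinearMap.liftBaseChange_tmul, one_smul] at hz'
        exact ⟨⟨1 ⊗ₜ e, 1 ⊗ₜ ⟨e, hz'⟩, rfl⟩, rfl⟩
      · rintro ⟨x, rfl⟩
        exact LinearMap.congr_fun (congr_arg ModuleCat.Hom.hom T.zero) x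
    · intro x
      obtain ⟨e, rfl⟩ := hπ x
      exact ⟨1 ⊗ₜ e, by change ρ _ = _; simp [ρ]⟩

end Eisenbud

section CompleteIntersection

open Abelian TensorProduct IsLocalRing RingTheory.Sequence

lemma Module.Projective.of_algebraMap_surjective {Q B X : Type*} [CommRing Q] [CommRing B]
    [Algebra Q B] [AddCommGroup X] [Module Q X] [Module B X] [IsScalarTower Q B X]
    (hsurj : Function.Surjective (algebraMap Q B)) [Module.Projective Q X] :
    Module.Projective B X := by
  let p := Finsupp.linearCombination B (id : X → X)
  obtain ⟨s, hs⟩ := Module.projective_lifting_property (p.restrictScalars Q) LinearMap.id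
    (Finsupp.linearCombination_id_surjective B X)
  exact Module.Projective.of_split (LinearMap.extendScalarsOfSurjective hsurj s) p
    (LinearMap.ext fun x ↦ LinearMap.congr_fun hs x)

variable {Q : Type u} [CommRing Q]

lemma hasProjectiveDimensionLT_pi_fin (X : Type u) [AddCommGroup X] [Module Q X] (m : ℕ)
    [HasProjectiveDimensionLT (ModuleCat.of Q X) m] (n : ℕ) :
    HasProjectiveDimensionLT (ModuleCat.of Q (Fin n → X)) m := by
  induction n with
  | zero =>
    have := (ModuleCat.isZero_of_subsingleton
      (ModuleCat.of Q (Fin 0 → X))).hasProjectiveDimensionLT_zero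
    exact hasProjectiveDimensionLT_of_ge _ 0 m (Nat.zero_le m)
  | succ n ih =>
    let S : ShortComplex (ModuleCat.{u} Q) :=
      ShortComplex.mk (ModuleCat.ofHom (LinearMap.single Q (fun _ : Fin (n + 1) ↦ X) 0))
        (ModuleCat.ofHom (LinearMap.funLeft Q X (Fin.succ : Fin n → Fin (n + 1)))) (by
          ext x i
          simp [LinearMap.funLeft_apply]
          rfl)
    have hS : S.ShortExact := by
      refine shortExact_of_exact (Pi.single_injective (M := fun _ ↦ X) 0)
        (fun v ↦ ⟨fun hv ↦ ⟨v 0, ?_⟩, ?_⟩)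
        (LinearMap.funLeft_surjective_of_injective _ _ _ (Fin.succ_injective n))
      · refine funext fun i ↦ ?_
        induction i using Fin.cases with
        | zero => exact Pi.single_eq_same (M := fun _ ↦ X) 0 (v 0)
        | succ i => exact (Pi.single_eq_of_ne (Fin.succ_ne_zero i) (v 0)).trans (congr_fun hv i).symm
      · rintro ⟨x, rfl⟩
        exact LinearMap.congr_fun (congr_arg ModuleCat.Hom.hom S.zero) x
    exact hS.hasProjectiveDimensionLT_X₂ m ‹_› ih

variable [IsLocalRing Q] [IsNoetherianRing Q]

lemma hasProjectiveDimensionLT_quotient_ofList {l : List Q} (hreg : IsWeaklyRegular Q l)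
    (hmem : ∀ r ∈ l, r ∈ maximalIdeal Q) :
    HasProjectiveDimensionLT (ModuleCat.of Q (Q ⧸ Ideal.ofList l)) (l.length + 1) := by
  have h := ModuleCat.projectiveDimension_quotient_eq_add_length_of_isWeaklyRegular
    (ModuleCat.of Q Q) l hreg hmem
  rw [ModuleCat.projectiveDimension_eq_zero_of_projective (ModuleCat.of Q Q), zero_add] at h
  have h' := (projectiveDimension_le_iff _ _).1 h.le
  have e : (Q ⧸ (Ideal.ofList l • ⊤ : Ideal Q)) ≃ₗ[Q] Q ⧸ Ideal.ofList l :=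
    Submodule.quotEquivOfEq _ _ (by rw [smul_eq_mul, Ideal.mul_top])
  exact ModuleCat.hasProjectiveDimensionLE_of_linearEquiv
    (M := ModuleCat.of Q (Q ⧸ (Ideal.ofList l • ⊤ : Ideal Q)))
    (N := ModuleCat.of Q (Q ⧸ Ideal.ofList l)) e l.length

lemma isReducible_of_hasProjectiveDimensionLT {l : List Q} (hreg : IsWeaklyRegular Q l)
    (hmem : ∀ r ∈ l, r ∈ maximalIdeal Q) (B : Type u) [CommRing B] [Algebra Q B]
    (hsurj : Function.Surjective (algebraMap Q B))
    (hker : RingHom.ker (algebraMap Q B) = Ideal.ofList l) (X : Type u) [AddCommGroup X]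
    [Module Q X] [Module B X] [IsScalarTower Q B X] [Module.Finite B X]
    (hX : HasProjectiveDimensionLT (ModuleCat.of Q X) (l.length + 1)) :
    IsReducible l.length (ModuleCat.of B X) := by
  induction l using List.reverseRecOn generalizing B X with
  | nil =>
    have : Module.Projective Q X := (IsProjective.iff_projective X).2
      (projective_iff_hasProjectiveDimensionLT_one.2 hX)
    exact ⟨‹_›, Module.Projective.of_algebraMap_surjective (Q := Q) hsurj⟩
  | append_singleton l a ih =>
    obtain ⟨hl, ha⟩ := (isWeaklyRegular_append_iff Q l [a]).1 hreg
    have hmem' : ∀ r ∈ l, r ∈ maximalIdeal Q := fun r hr ↦ hmem r (by simp [hr])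
    have hle : Ideal.ofList l ≤ RingHom.ker (algebraMap Q B) := by
      rw [hker, Ideal.ofList_append]; exact le_sup_left
    let A := Q ⧸ Ideal.ofList l
    let _ : Algebra A B := (Ideal.Quotient.lift (Ideal.ofList l) (algebraMap Q B) hle).toAlgebra
    have : IsScalarTower Q A B := .of_algebraMap_eq fun q ↦ rfl
    let _ : Module A X := Module.compHom X (algebraMap A B)
    have : IsScalarTower A B X := .of_algebraMap_smul fun _ _ ↦ rfl
    have : IsScalarTower Q A X := .of_algebraMap_smul fun q x ↦ by
      rw [← algebraMap_smul B q x]; rfl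
    have hsurj' : Function.Surjective (algebraMap A B) := .of_comp (g := algebraMap Q A) hsurj
    have hker' : RingHom.ker (algebraMap A B) = Ideal.span {algebraMap Q A a} := by
      refine (Ideal.ker_quotient_lift (algebraMap Q B) hle).trans ?_
      rw [hker, Ideal.map_ofList, List.map_append, Ideal.ofList_append, ← Ideal.map_ofList,
        Ideal.map_quotient_self, bot_sup_eq, List.map_singleton, Ideal.ofList_singleton]
      rfl
    have hreg_a : IsSMulRegular A (algebraMap Q A a) := by
      have h := (isWeaklyRegular_singleton_iff _ _).1 ha
      have e : (Q ⧸ (Ideal.ofList l • ⊤ : Ideal Q)) ≃ₗ[Q] A :=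
        Submodule.quotEquivOfEq _ _ (by rw [smul_eq_mul, Ideal.mul_top])
      have h' := (e.isSMulRegular_congr a).1 h
      exact fun x y hxy ↦ h' (by simpa only [algebraMap_smul] using hxy)
    have : Module.Finite A B := .of_surjective (Algebra.linearMap A B) hsurj'
    have : Module.Finite A X := .trans B X
    obtain ⟨n, π, hπ⟩ := Module.Finite.exists_fin' A X
    have hpdA := hasProjectiveDimensionLT_quotient_ofList hl hmem'
    have hpdF := hasProjectiveDimensionLT_pi_fin (Q := Q) A (l.length + 1) n
    have hS := LinearMap.shortExact_shortComplexKer hπ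
    have hSQ := LinearMap.shortExact_shortComplexKer (f := π.restrictScalars Q) hπ
    have hpdK : HasProjectiveDimensionLT (ModuleCat.of Q (LinearMap.ker π)) (l.length + 1) := by
      refine hSQ.hasProjectiveDimensionLT_X₁ (l.length + 1) hpdF ?_
      simpa using hX
    have hred := ih hl hmem' A Ideal.Quotient.mk_surjective Ideal.mk_ker (LinearMap.ker π) hpdK
    rw [List.length_append, List.length_singleton]
    have : HasProjectiveDimensionLT (ModuleCat.of A B) 2 :=
      hasProjectiveDimensionLT_of_ker_eq_span_singleton hreg_a hsurj' hker'
    have : Projective π.shortComplexKer.X₂ :=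
      (IsProjective.iff_projective (ModuleCat.of A (Fin n → A))).1 inferInstance
    refine IsReducible.succ_of_ker (IsSMulRegular.pi fun _ ↦ hreg_a) hsurj' hker' π hπ ?_
    exact hred.baseChange (TorIndependent.of_hasProjectiveDimensionLT_two _ hS)

end CompleteIntersection

section Assembly

open Abelian TensorProduct IsLocalRing RingTheory.Sequence

lemma exists_length_ext_residueModule_le {Q : Type u} [CommRing Q] [IsLocalRing Q]
    [IsNoetherianRing Q] {f : List Q} (hreg : IsWeaklyRegular Q f)
    (hmem : ∀ r ∈ f, r ∈ maximalIdeal Q) [IsLocalRing (Q ⧸ Ideal.ofList f)] (m : ℕ)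
    (X : Type u) [AddCommGroup X] [Module Q X] [Module (Q ⧸ Ideal.ofList f) X]
    [IsScalarTower Q (Q ⧸ Ideal.ofList f) X] [Module.Finite (Q ⧸ Ideal.ofList f) X]
    (hX : HasProjectiveDimensionLT (ModuleCat.of Q X) (f.length + m + 1)) :
    ∃ C : ℕ, ∀ n, Module.length (Q ⧸ Ideal.ofList f)
      (Ext (ModuleCat.of (Q ⧸ Ideal.ofList f) X) (residueModule (Q ⧸ Ideal.ofList f)) (n + m)) ≤
        (C * iteratedSum f.length n : ℕ) := by
  induction m generalizing X with
  | zero =>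
    exact (isReducible_of_hasProjectiveDimensionLT hreg hmem _ Ideal.Quotient.mk_surjective
      Ideal.mk_ker X hX).exists_length_ext_le _ length_hom_residueModule_ne_top
  | succ m ih =>
    obtain ⟨r, π, hπ⟩ : ∃ (r : ℕ) (π : (Fin r → Q ⧸ Ideal.ofList f) →ₗ[Q ⧸ Ideal.ofList f] X),
        Function.Surjective π := Module.Finite.exists_fin' _ _
    have hpd := hasProjectiveDimensionLT_quotient_ofList hreg hmem
    have := hasProjectiveDimensionLT_pi_fin (Q := Q) (Q ⧸ Ideal.ofList f) (f.length + 1) r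
    have hpdF := hasProjectiveDimensionLT_of_ge
      (ModuleCat.of Q (Fin r → Q ⧸ Ideal.ofList f)) (f.length + 1) (f.length + m + 1) (by lia)
    have hS := LinearMap.shortExact_shortComplexKer hπ
    have hSQ := LinearMap.shortExact_shortComplexKer (f := π.restrictScalars Q) hπ
    have hpdK : HasProjectiveDimensionLT (ModuleCat.of Q (LinearMap.ker π)) (f.length + m + 1) :=
      hSQ.hasProjectiveDimensionLT_X₁ (f.length + m + 1) hpdF hX
    obtain ⟨C, hC⟩ := ih (LinearMap.ker π) hpdK
    have : Projective π.shortComplexKer.X₂ :=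
      (IsProjective.iff_projective (ModuleCat.of (Q ⧸ Ideal.ofList f) (Fin r → _))).1 inferInstance
    exact ⟨C, fun n ↦ (Module.length_le_of_surjective _
      (extConnecting_surjective hS (residueModule _) (n + m))).trans (hC n)⟩

lemma finite_tensorUpTo {R : Type u} [CommRing R] (M : ℕ → ModuleCat.{u} R) (i : ℕ)
    (h : ∀ j ≤ i, Module.Finite R (M j)) : Module.Finite R (tensorUpTo R M i) := by
  induction i with
  | zero => exact h 0 le_rfl
  | succ i ih =>
    have := ih fun j hj ↦ h j (by lia)
    have := h (i + 1) le_rfl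
    exact inferInstanceAs (Module.Finite R (tensorUpTo R M i ⊗[R] M (i + 1)))

lemma iteratedSum_le_length_ext_tensorUpTo {R : Type u} [CommRing R] [IsLocalRing R]
    [IsNoetherianRing R] (M : ℕ → ModuleCat.{u} R) (i : ℕ)
    (hfin : ∀ j ≤ i, Module.Finite R (M j))
    (hM : ∀ j ≤ i, ∀ n, Nontrivial (Ext (M j) (residueModule R) n))
    (htor : ∀ j < i, TorIndependent (tensorUpTo R M j) (M (j + 1))) (n : ℕ) :
    (iteratedSum (i + 1) n : ℕ∞) ≤ Module.length R (Ext (tensorUpTo R M i) (residueModule R) n) := by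
  induction i generalizing n with
  | zero =>
    have := hM 0 le_rfl n
    have hsum : iteratedSum 1 n = 1 := by simp [iteratedSum_succ_eq_choose]
    rw [hsum, Nat.cast_one, Order.one_le_iff_pos]
    exact Module.length_pos_iff.2 this
  | succ i ih =>
    have := hfin (i + 1) le_rfl
    refine le_trans ?_ (sum_length_ext_le_length_ext_tensor (tensorUpTo R M i) (M (i + 1))
      (hM (i + 1) le_rfl) (htor i (by lia)) n)
    rw [iteratedSum, Nat.cast_sum]
    exact Finset.sum_le_sum fun k _ ↦ ih (fun j hj ↦ hfin j (by lia)) (fun j hj ↦ hM j (by lia))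
      (fun j hj ↦ htor j (by lia)) k

end Assembly

theorem stmt_4 (Q : Type u) [CommRing Q] [IsLocalRing Q] (hQ : IsRegularLocal Q)
    (f : List Q) (hf : RingTheory.Sequence.IsRegular Q f)
    [IsLocalRing (Q ⧸ Ideal.ofList f)]
    (M : ℕ → ModuleCat.{u} (Q ⧸ Ideal.ofList f))
    (hfin : ∀ i ≤ f.length, Module.Finite (Q ⧸ Ideal.ofList f) (M i))
    (hnonfree : ∀ i ≤ f.length, ¬ Module.Free (Q ⧸ Ideal.ofList f) (M i))
    (hMCM : ∀ i ≤ f.length, (moduleDepth (Q ⧸ Ideal.ofList f) (M i) : WithBot ℕ∞) =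
      ringKrullDim (Q ⧸ Ideal.ofList f)) :
    ∃ i : ℕ, 1 ≤ i ∧ i ≤ f.length ∧
      {n : ℕ | ¬ IsZero (((Tor (ModuleCat.{u} (Q ⧸ Ideal.ofList f)) n).obj
        (tensorUpTo (Q ⧸ Ideal.ofList f) M (i - 1))).obj (M i))}.Infinite := by
  by_contra! hcon
  have := hQ.1
  have hmem : ∀ r ∈ f, r ∈ IsLocalRing.maximalIdeal Q := fun r hr ↦
    IsLocalRing.le_maximalIdeal (J := Ideal.ofList f) (fun h ↦ hf.top_ne_smul (by simp [h]))
      (Ideal.subset_span hr)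
  have hred (i : ℕ) (hi : i ≤ f.length) : IsReducible f.length (M i) := by
    let _ : Module Q (M i) := Module.compHom (M i) (algebraMap Q (Q ⧸ Ideal.ofList f))
    have : IsScalarTower Q (Q ⧸ Ideal.ofList f) (M i) := .of_algebraMap_smul fun _ _ ↦ rfl
    have := hfin i hi
    have : Nontrivial (M i) := by
      by_contra h
      rw [not_nontrivial_iff_subsingleton] at h
      exact hnonfree i hi inferInstance
    exact isReducible_of_hasProjectiveDimensionLT hf.1 hmem _ Ideal.Quotient.mk_surjective
      Ideal.mk_ker (M i) (hasProjectiveDimensionLT_of_moduleDepth_eq hQ hf (M i) (hMCM i hi))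
  have htor (i : ℕ) (hi : i < f.length) :
      TorIndependent (tensorUpTo (Q ⧸ Ideal.ofList f) M i) (M (i + 1)) := by
    refine (hred (i + 1) hi).subsingleton_ext _ ?_
    obtain ⟨N, hN⟩ := (hcon (i + 1) (by lia) hi).bddAbove
    refine Filter.eventually_atTop.2 ⟨N + 1, fun n hn ↦ ?_⟩
    obtain ⟨n, rfl⟩ : ∃ m, n = m + 1 := ⟨n - 1, by lia⟩
    refine subsingleton_ext_of_isZero_tor _ _ n (not_not.1 fun h ↦ ?_)
    have := hN h
    lia
  have hlower := iteratedSum_le_length_ext_tensorUpTo M f.length hfin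
    (fun i hi ↦ have := hfin i hi; (hred i hi).nontrivial_ext_residueModule (hnonfree i hi)) htor
  obtain ⟨d, -, hd⟩ := hQ.exists_hasProjectiveDimensionLT
  let X := tensorUpTo (Q ⧸ Ideal.ofList f) M f.length
  have : Module.Finite (Q ⧸ Ideal.ofList f) X := finite_tensorUpTo M f.length hfin
  let _ : Module Q X := Module.compHom X (algebraMap Q (Q ⧸ Ideal.ofList f))
  have : IsScalarTower Q (Q ⧸ Ideal.ofList f) X := .of_algebraMap_smul fun _ _ ↦ rfl
  have : Module.Finite Q X := .trans (Q ⧸ Ideal.ofList f) X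
  have := hd (ModuleCat.of Q X)
  obtain ⟨C, hC⟩ := exists_length_ext_residueModule_le hf.1 hmem d X
    (hasProjectiveDimensionLT_of_ge _ (d + 1) (f.length + d + 1) (by lia))
  obtain ⟨n, hn⟩ := exists_mul_iteratedSum_lt f.length C
  have h : iteratedSum (f.length + 1) (n + d) ≤ C * iteratedSum f.length n := by
    exact_mod_cast (hlower (n + d)).trans (hC n)
  exact absurd ((iteratedSum_monotone f.length (Nat.le_add_right n d)).trans h) (not_le.2 hn)
end
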